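/- arXiv:2101.07545 — 3 statements merged into one kernel-verified Lean document; each statement's English description precedes it below -/
import Mathlib

section
/- Let H be a real Hilbert space, λ ∈ ℝ, and let f : H → (-∞,∞] be proper, λ-convex and lower semicontinuous. Let τ > 0 be such that (1 + τλ)^{-1} ≤ 2. Then for all x_0, x_τ ∈ H with ∂f(x_0) ≠ ∅ and ∂f(x_τ) ≠ ∅, one has Γ_τ(x_0, x_τ) ≤ (52/τ)‖x_τ − x_0‖² + 210 τ · max(|∇f|²(x_0), |∇f|²(x_τ)). -/
open Filter Topology MeasureTheory Set
open scoped ENNReal RealInnerProductSpace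

noncomputable section

attribute [local instance] Classical.propDecidable

variable {H : Type*} [NormedAddCommGroup H] [InnerProductSpace ℝ H] [CompleteSpace H]

/-- `f : H → (-∞,∞]` is proper: not identically `⊤` (and it never takes the value `⊥`). -/
def ProperFn (f : H → EReal) : Prop :=
  (∃ x, f x ≠ ⊤) ∧ ∀ x, f x ≠ ⊥

/-- `f` is `λ`-convex: `x ↦ f x - (λ/2)‖x‖²` is convex, expressed via the perturbed
convexity inequality. -/
def LambdaConvex (lam : ℝ) (f : H → EReal) : Prop :=
  ∀ x y : H, ∀ t : ℝ, 0 ≤ t → t ≤ 1 →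
    f ((1 - t) • x + t • y)
      ≤ ((1 - t : ℝ) : EReal) * f x + ((t : ℝ) : EReal) * f y
        - ((lam / 2 * (t * (1 - t)) * ‖x - y‖ ^ 2 : ℝ) : EReal)

/-- The subdifferential of a `λ`-convex function at `x` (contained in the domain of `f`). -/
def subdiff (lam : ℝ) (f : H → EReal) (x : H) : Set H :=
  {p : H | f x ≠ ⊤ ∧
    ∀ y : H, f x + ((⟪p, y - x⟫ + lam / 2 * ‖y - x‖ ^ 2 : ℝ) : EReal) ≤ f y}

/-- `∇f(x)`: the element of minimal norm of `∂f(x)` (junk value `0` if there is none). -/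
def gradMin (lam : ℝ) (f : H → EReal) (x : H) : H :=
  if h : ∃ p ∈ subdiff lam f x, ∀ q ∈ subdiff lam f x, ‖p‖ ≤ ‖q‖ then h.choose else 0

/-- `|∇f|(x) ∈ [0,∞]`, equal to `+∞` when `∂f(x) = ∅` (in particular when `f x = ⊤`). -/
def gradNorm (lam : ℝ) (f : H → EReal) (x : H) : ℝ≥0∞ :=
  if (subdiff lam f x).Nonempty then ENNReal.ofReal ‖gradMin lam f x‖ else ⊤

/-- The resolvent `J_τ(x)`: the minimizer of `y ↦ f y + ‖y-x‖²/(2τ)` (junk `0` if none). -/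
def Jres (f : H → EReal) (τ : ℝ) (x : H) : H :=
  if h : ∃ y : H, ∀ z : H,
      f y + ((‖y - x‖ ^ 2 / (2 * τ) : ℝ) : EReal)
        ≤ f z + ((‖z - x‖ ^ 2 / (2 * τ) : ℝ) : EReal)
  then h.choose else 0

/-- The Moreau–Yosida regularization `f_τ(x) = min_y (f y + ‖y-x‖²/(2τ))`. -/
def moreau (f : H → EReal) (τ : ℝ) (x : H) : ℝ :=
  (f (Jres f τ x)).toReal + ‖Jres f τ x - x‖ ^ 2 / (2 * τ)

/-- `γ` is absolutely continuous on `[a,b]` with an integrable derivative. -/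
abbrev IsACCurve (a b : ℝ) (γ : ℝ → H) : Prop :=
  ∃ g : ℝ → H, IntegrableOn g (Icc a b) ∧ ∀ t ∈ Icc a b, γ t = γ a + ∫ s in a..t, g s

/-- The action `I_f^{[a,b]}(γ) = ∫_a^b (‖γ̇‖² + |∇f|²(γ)) dt ∈ [0,∞]`, set to `+∞` when `γ`
is not absolutely continuous. -/
def actionFn (lam : ℝ) (f : H → EReal) (a b : ℝ) (γ : ℝ → H) : ℝ≥0∞ :=
  if h : IsACCurve a b γ then
    ∫⁻ t in Ioc a b, (ENNReal.ofReal (‖h.choose t‖ ^ 2) + gradNorm lam f (γ t) ^ 2)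
  else ⊤

/-- `Θ_{f,x₀,x₁}`: the action on `[0,1]` with endpoint constraints. -/
def Theta (lam : ℝ) (f : H → EReal) (x0 x1 : H) (γ : ℝ → H) : ℝ≥0∞ :=
  if γ 0 = x0 ∧ γ 1 = x1 then actionFn lam f 0 1 γ else ⊤

/-- `Γ_δ(x₀,x_δ)`: infimum of the action over curves joining the endpoints. -/
def GammaInf (lam : ℝ) (f : H → EReal) (δ : ℝ) (x0 xδ : H) : ℝ≥0∞ :=
  ⨅ (γ : ℝ → H) (_ : γ 0 = x0 ∧ γ δ = xδ), actionFn lam f 0 δ γ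

/-- Mosco convergence of `fh` to `f`: recovery sequences for the strong topology, and the
`liminf` inequality along weakly convergent sequences. -/
def Mosco (fh : ℕ → H → EReal) (f : H → EReal) : Prop :=
  (∀ x : H, ∃ xh : ℕ → H, Tendsto xh atTop (𝓝 x) ∧
      Filter.limsup (fun h => fh h (xh h)) atTop ≤ f x) ∧
  (∀ (xh : ℕ → H) (x : H),
      (∀ p : H, Tendsto (fun h => ⟪xh h, p⟫) atTop (𝓝 ⟪x, p⟫)) →
      f x ≤ Filter.liminf (fun h => fh h (xh h)) atTop)

lemma aux_conv (lam : ℝ) (f : H → EReal) (hf : ProperFn f) (hconv : LambdaConvex lam f)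
    (x y : H) (hx : f x ≠ ⊤) (hy : f y ≠ ⊤) (t : ℝ) (ht0 : 0 ≤ t) (ht1 : t ≤ 1) :
    f ((1 - t) • x + t • y) ≠ ⊤ ∧
    (f ((1 - t) • x + t • y)).toReal ≤ (1 - t) * (f x).toReal + t * (f y).toReal
      - lam / 2 * (t * (1 - t)) * ‖x - y‖ ^ 2 := by
  have h := hconv x y t ht0 ht1
  have ex := EReal.coe_toReal hx (hf.2 x)
  have ey := EReal.coe_toReal hy (hf.2 y)
  rw [← ex, ← ey, ← EReal.coe_mul, ← EReal.coe_mul, ← EReal.coe_add, ← EReal.coe_sub] at h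
  have hne : f ((1 - t) • x + t • y) ≠ ⊤ := by
    intro h'
    rw [h'] at h
    exact EReal.coe_ne_top _ (top_le_iff.mp h)
  refine ⟨hne, ?_⟩
  rw [← EReal.coe_toReal hne (hf.2 _)] at h
  exact EReal.coe_le_coe_iff.mp h

lemma aux_subdiff (lam : ℝ) (f : H → EReal) (hf : ProperFn f) (x p : H) :
    p ∈ subdiff lam f x ↔ f x ≠ ⊤ ∧ ∀ y, f y ≠ ⊤ →
      (f x).toReal + (⟪p, y - x⟫ + lam / 2 * ‖y - x‖ ^ 2) ≤ (f y).toReal := by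
  constructor
  · rintro ⟨hx, h⟩
    refine ⟨hx, fun y hy => ?_⟩
    have := h y
    rw [← EReal.coe_toReal hx (hf.2 x), ← EReal.coe_toReal hy (hf.2 y), ← EReal.coe_add] at this
    exact EReal.coe_le_coe_iff.mp this
  · rintro ⟨hx, h⟩
    refine ⟨hx, fun y => ?_⟩
    by_cases hy : f y = ⊤
    · rw [hy]; exact le_top
    have := h y hy
    rw [← EReal.coe_toReal hx (hf.2 x), ← EReal.coe_toReal hy (hf.2 y), ← EReal.coe_add]
    exact EReal.coe_le_coe_iff.mpr this

/-- Existence of the element of minimal norm. -/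
lemma aux_gradMin_mem (lam : ℝ) (f : H → EReal) (hf : ProperFn f) (x : H)
    (hx : (subdiff lam f x).Nonempty) : gradMin lam f x ∈ subdiff lam f x := by
  have hfx : f x ≠ ⊤ := hx.some_mem.1
  have hS : subdiff lam f x = ⋂ (y : H) (_ : f y ≠ ⊤), {p : H |
      (f x).toReal + (⟪p, y - x⟫ + lam / 2 * ‖y - x‖ ^ 2) ≤ (f y).toReal} := by
    ext p
    rw [aux_subdiff lam f hf]
    simp [hfx]
  have hcl : IsClosed (subdiff lam f x) := by
    rw [hS]
    refine isClosed_iInter fun y => isClosed_iInter fun _ => ?_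
    exact isClosed_le (by fun_prop) continuous_const
  have hcv : Convex ℝ (subdiff lam f x) := by
    rw [hS]
    refine convex_iInter fun y => convex_iInter fun _ => ?_
    intro p hp q hq a b ha hb hab
    simp only [mem_setOf_eq, inner_add_left, inner_smul_left] at *
    simp only [conj_trivial]
    have h1 := mul_le_mul_of_nonneg_left hp ha
    have h2 := mul_le_mul_of_nonneg_left hq hb
    have hb' : b = 1 - a := by linarith
    subst hb'
    nlinarith
  obtain ⟨p, hp, hmin⟩ := exists_norm_eq_iInf_of_complete_convex hx hcl.isComplete hcv 0
  have key : ∃ p ∈ subdiff lam f x, ∀ q ∈ subdiff lam f x, ‖p‖ ≤ ‖q‖ := by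
    refine ⟨p, hp, fun q hq => ?_⟩
    have := ciInf_le (f := fun w : subdiff lam f x => ‖(0 : H) - w‖)
      ⟨0, by rintro _ ⟨w, rfl⟩; positivity⟩ ⟨q, hq⟩
    rw [← hmin] at this
    simpa using this
  unfold gradMin
  rw [dif_pos key]
  exact key.choose_spec.1

lemma aux_gradNorm_le (lam : ℝ) (f : H → EReal) (x p : H)
    (hp : p ∈ subdiff lam f x) : gradNorm lam f x ≤ ENNReal.ofReal ‖p‖ := by
  unfold gradNorm
  rw [if_pos ⟨p, hp⟩]
  apply ENNReal.ofReal_le_ofReal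
  unfold gradMin
  split_ifs with h
  · exact h.choose_spec.2 p hp
  · simp

lemma aux_mono (lam : ℝ) (f : H → EReal) (hf : ProperFn f) (x y p q : H)
    (hp : p ∈ subdiff lam f x) (hq : q ∈ subdiff lam f y) :
    lam * ‖x - y‖ ^ 2 ≤ ⟪p - q, x - y⟫ := by
  rw [aux_subdiff lam f hf] at hp hq
  have h1 := hp.2 y hq.1
  have h2 := hq.2 x hp.1
  have e : y - x = -(x - y) := by abel
  rw [e, inner_neg_right, norm_neg] at h1
  rw [inner_sub_left]
  nlinarith

lemma aux_lip (lam : ℝ) (f : H → EReal) (hf : ProperFn f) (τ : ℝ) (hτ : 0 < τ)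
    (hb : 1 / 2 ≤ 1 + τ * lam) (x y p q : H)
    (hp : p ∈ subdiff lam f x) (hq : q ∈ subdiff lam f y) :
    ‖x - y‖ ≤ 2 * ‖(x + τ • p) - (y + τ • q)‖ := by
  have h := aux_mono lam f hf x y p q hp hq
  have e : (x + τ • p) - (y + τ • q) = (x - y) + τ • (p - q) := by rw [smul_sub]; abel
  have h2 := real_inner_le_norm ((x + τ • p) - (y + τ • q)) (x - y)
  have h3 : ⟪(x + τ • p) - (y + τ • q), x - y⟫ = ‖x - y‖ ^ 2 + τ * ⟪p - q, x - y⟫ := by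
    rw [e, inner_add_left, real_inner_self_eq_norm_sq, inner_smul_left]; simp
  have h4 := mul_le_mul_of_nonneg_left h hτ.le
  by_cases h0 : ‖x - y‖ = 0
  · rw [h0]; positivity
  have hpos : 0 < ‖x - y‖ := lt_of_le_of_ne (norm_nonneg _) (Ne.symm h0)
  have h5 : 1 / 2 * ‖x - y‖ ^ 2 ≤ (1 + τ * lam) * ‖x - y‖ ^ 2 := by gcongr
  have h6 : ‖x - y‖ * ‖x - y‖ ≤ (2 * ‖(x + τ • p) - (y + τ • q)‖) * ‖x - y‖ := by nlinarith
  exact le_of_mul_le_mul_right h6 hpos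

lemma aux_norm_comb (y z x : H) (t : ℝ) : ‖((1 - t) • y + t • z) - x‖ ^ 2
    = (1 - t) * ‖y - x‖ ^ 2 + t * ‖z - x‖ ^ 2 - t * (1 - t) * ‖y - z‖ ^ 2 := by
  have e1 : ((1 - t) • y + t • z) - x = (1 - t) • (y - x) + t • (z - x) := by
    module
  have e2 : y - z = (y - x) - (z - x) := by abel
  rw [e1, e2]
  generalize y - x = a
  generalize z - x = b
  rw [norm_add_sq_real, norm_sub_sq_real, inner_smul_left, inner_smul_right, norm_smul, norm_smul,
    mul_pow, mul_pow]
  simp only [Real.norm_eq_abs, sq_abs, conj_trivial]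
  ring

/-- Strong convexity of the perturbed functional. -/
lemma aux_sconv (lam : ℝ) (f : H → EReal) (hf : ProperFn f) (hconv : LambdaConvex lam f)
    (τ : ℝ) (c : H)
    (x y : H) (hx : f x ≠ ⊤) (hy : f y ≠ ⊤) (t : ℝ) (ht0 : 0 ≤ t) (ht1 : t ≤ 1) :
    (f ((1 - t) • x + t • y)).toReal + ‖((1 - t) • x + t • y) - c‖ ^ 2 / (2 * τ)
      ≤ (1 - t) * ((f x).toReal + ‖x - c‖ ^ 2 / (2 * τ))
        + t * ((f y).toReal + ‖y - c‖ ^ 2 / (2 * τ))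
      - (lam + 1 / τ) / 2 * (t * (1 - t)) * ‖x - y‖ ^ 2 := by
  have h := (aux_conv lam f hf hconv x y hx hy t ht0 ht1).2
  rw [aux_norm_comb]
  have : ((1 - t) * ‖x - c‖ ^ 2 + t * ‖y - c‖ ^ 2 - t * (1 - t) * ‖x - y‖ ^ 2) / (2 * τ)
    = (1 - t) * (‖x - c‖ ^ 2 / (2 * τ)) + t * (‖y - c‖ ^ 2 / (2 * τ))
      - (1 / τ) / 2 * (t * (1 - t)) * ‖x - y‖ ^ 2 := by
    rw [div_div]; ring
  rw [this]
  linarith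

lemma aux_exists_min (lam : ℝ) (f : H → EReal)
    (hf : ProperFn f) (hconv : LambdaConvex lam f) (hlsc : LowerSemicontinuous f)
    (τ : ℝ) (hτ : 0 < τ) (hμ : 0 < lam + 1 / τ)
    (x0 p0 : H) (h0 : p0 ∈ subdiff lam f x0) (c : H) :
    ∃ y, f y ≠ ⊤ ∧ ∀ z, f z ≠ ⊤ → (f y).toReal + ‖y - c‖ ^ 2 / (2 * τ)
      ≤ (f z).toReal + ‖z - c‖ ^ 2 / (2 * τ) := by
  set φ : H → ℝ := fun z => (f z).toReal + ‖z - c‖ ^ 2 / (2 * τ) with hφ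
  set μ := lam + 1 / τ with hμd
  rw [aux_subdiff lam f hf] at h0
  have hbd : BddBelow (φ '' {z | f z ≠ ⊤}) := by
    refine ⟨(f x0).toReal + ‖x0 - c‖ ^ 2 / (2 * τ) - ‖p0 + (1 / τ) • (x0 - c)‖ ^ 2 / (2 * μ), ?_⟩
    rintro _ ⟨z, hz, rfl⟩
    have h1 := h0.2 z hz
    simp only [hφ]
    have e : z - c = (z - x0) + (x0 - c) := by abel
    rw [e]
    generalize z - x0 = w at *
    generalize x0 - c = v at *
    have h2 : ‖w + v‖ ^ 2 / (2 * τ) = 1 / τ / 2 * ‖w‖ ^ 2 + 1 / τ * ⟪v, w⟫ + ‖v‖ ^ 2 / (2 * τ) := by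
      rw [norm_add_sq_real, real_inner_comm w v]; field_simp
    have h3 : ⟪p0 + (1 / τ) • v, w⟫ = ⟪p0, w⟫ + 1 / τ * ⟪v, w⟫ := by
      rw [inner_add_left, inner_smul_left]; simp
    have h4 : -(‖p0 + (1 / τ) • v‖ * ‖w‖) ≤ ⟪p0 + (1 / τ) • v, w⟫ :=
      (abs_le.mp (abs_real_inner_le_norm _ _)).1
    generalize ‖p0 + (1 / τ) • v‖ = a at *
    have h5 : a * ‖w‖ ≤ a ^ 2 / (2 * μ) + μ / 2 * ‖w‖ ^ 2 := by
      have : a ^ 2 / (2 * μ) + μ / 2 * ‖w‖ ^ 2 - a * ‖w‖ = (a - μ * ‖w‖) ^ 2 / (2 * μ) := by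
        field_simp; ring
      have h6 : 0 ≤ (a - μ * ‖w‖) ^ 2 / (2 * μ) := by positivity
      linarith
    rw [h2]
    have : μ / 2 * ‖w‖ ^ 2 = lam / 2 * ‖w‖ ^ 2 + 1 / τ / 2 * ‖w‖ ^ 2 := by rw [hμd]; ring
    linarith
  have hne : (φ '' {z | f z ≠ ⊤}).Nonempty := ⟨_, x0, h0.1, rfl⟩
  set m := sInf (φ '' {z | f z ≠ ⊤}) with hm
  have hmle : ∀ z, f z ≠ ⊤ → m ≤ φ z := fun z hz => csInf_le hbd ⟨z, hz, rfl⟩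
  have hex : ∀ n : ℕ, ∃ z, f z ≠ ⊤ ∧ φ z < m + 1 / ((n : ℝ) + 1) := by
    intro n
    have : m < m + 1 / ((n : ℝ) + 1) := by
      have : 0 < 1 / ((n : ℝ) + 1) := by positivity
      linarith
    obtain ⟨_, ⟨z, hz, rfl⟩, hlt⟩ := exists_lt_of_csInf_lt hne this
    exact ⟨z, hz, hlt⟩
  choose u hu hum using hex
  have hto : Tendsto (fun n : ℕ => 1 / ((n : ℝ) + 1)) atTop (𝓝 0) :=
    tendsto_one_div_add_atTop_nhds_zero_nat
  have hdist : ∀ a b : ℕ, μ / 8 * ‖u a - u b‖ ^ 2 ≤ (1 / ((a : ℝ) + 1) + 1 / ((b : ℝ) + 1)) / 2 := by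
    intro a b
    have h1 := aux_sconv lam f hf hconv τ c (u a) (u b) (hu a) (hu b) (1 / 2) (by norm_num) (by norm_num)
    have h2 := hmle _ (aux_conv lam f hf hconv (u a) (u b) (hu a) (hu b) (1 / 2)
      (by norm_num) (by norm_num)).1
    have h3 := hum a
    have h4 := hum b
    simp only [hφ] at h2 h3 h4
    rw [← hμd] at h1
    nlinarith
  have hcau : CauchySeq u := by
    rw [Metric.cauchySeq_iff']
    intro ε hε
    have hε' : 0 < μ / 8 * ε ^ 2 := by positivity
    obtain ⟨N, hN⟩ := (hto.eventually (gt_mem_nhds hε')).exists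
    refine ⟨N, fun n hn => ?_⟩
    have h1 := hdist n N
    have h2 : 1 / ((n : ℝ) + 1) ≤ 1 / ((N : ℝ) + 1) := by
      apply one_div_le_one_div_of_le (by positivity)
      have : (N : ℝ) ≤ n := by exact_mod_cast hn
      linarith
    rw [dist_eq_norm]
    have h3 : μ / 8 * ‖u n - u N‖ ^ 2 < μ / 8 * ε ^ 2 := by linarith
    have h4 := lt_of_mul_lt_mul_left h3 (by positivity)
    exact lt_of_pow_lt_pow_left₀ 2 hε.le h4
  obtain ⟨y, hy⟩ := cauchySeq_tendsto_of_complete hcau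
  have hfy : f y ≤ ((m - ‖y - c‖ ^ 2 / (2 * τ) : ℝ) : EReal) := by
    by_contra hcon
    push Not at hcon
    obtain ⟨r, hr1, hr2⟩ := EReal.lt_iff_exists_real_btwn.mp hcon
    have hev := hy.eventually (hlsc y r hr2)
    have hlim : Tendsto (fun n : ℕ => m + 1 / ((n : ℝ) + 1) - ‖u n - c‖ ^ 2 / (2 * τ)) atTop
        (𝓝 (m + 0 - ‖y - c‖ ^ 2 / (2 * τ))) :=
      (tendsto_const_nhds.add hto).sub ((((hy.sub_const c).norm).pow 2).div_const _)
    have : r ≤ m + 0 - ‖y - c‖ ^ 2 / (2 * τ) := by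
      refine ge_of_tendsto hlim ?_
      filter_upwards [hev] with n hn
      rw [← EReal.coe_toReal (hu n) (hf.2 _)] at hn
      have h1 := EReal.coe_lt_coe_iff.mp hn
      have h2 := hum n
      simp only [hφ] at h2
      linarith
    have h3 := EReal.coe_lt_coe_iff.mp hr1
    linarith
  have hyt : f y ≠ ⊤ := fun h => by
    rw [h] at hfy
    exact EReal.coe_ne_top _ (top_le_iff.mp hfy)
  refine ⟨y, hyt, fun z hz => ?_⟩
  have h1 := hmle z hz
  rw [← EReal.coe_toReal hyt (hf.2 _)] at hfy
  have h2 := EReal.coe_le_coe_iff.mp hfy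
  simp only [hφ] at h1
  linarith

/-- Surjectivity of `I + τ ∂f`. -/
lemma aux_resolvent (lam : ℝ) (f : H → EReal)
    (hf : ProperFn f) (hconv : LambdaConvex lam f) (hlsc : LowerSemicontinuous f)
    (τ : ℝ) (hτ : 0 < τ) (hadm : 0 < 1 + τ * lam)
    (x0 p0 : H) (h0 : p0 ∈ subdiff lam f x0) (c : H) :
    ∃ y p, p ∈ subdiff lam f y ∧ y + τ • p = c := by
  have hμ : 0 < lam + 1 / τ := by
    have : lam + 1 / τ = (1 + τ * lam) / τ := by field_simp; ring
    rw [this]; positivity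
  obtain ⟨y, hy, hmin⟩ := aux_exists_min lam f hf hconv hlsc τ hτ hμ x0 p0 h0 c
  refine ⟨y, (1 / τ) • (c - y), ?_, ?_⟩
  · rw [aux_subdiff lam f hf]
    refine ⟨hy, fun z hz => ?_⟩
    have key : ∀ t ∈ Ioo (0 : ℝ) 1, (lam + 1 / τ) / 2 * (1 - t) * ‖y - z‖ ^ 2 ≤
        ((f z).toReal + ‖z - c‖ ^ 2 / (2 * τ)) - ((f y).toReal + ‖y - c‖ ^ 2 / (2 * τ)) := by
      rintro t ⟨ht0, ht1⟩
      have h1 := aux_sconv lam f hf hconv τ c y z hy hz t ht0.le ht1.le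
      have h2 := hmin _ (aux_conv lam f hf hconv y z hy hz t ht0.le ht1.le).1
      refine le_of_mul_le_mul_left ?_ ht0
      nlinarith
    have hlim : Tendsto (fun t : ℝ => (lam + 1 / τ) / 2 * (1 - t) * ‖y - z‖ ^ 2) (𝓝[>] 0)
        (𝓝 ((lam + 1 / τ) / 2 * (1 - 0) * ‖y - z‖ ^ 2)) := by
      apply Tendsto.mono_left _ nhdsWithin_le_nhds
      apply Continuous.tendsto
      fun_prop
    have hle := le_of_tendsto hlim (by
      filter_upwards [Ioo_mem_nhdsGT (show (0 : ℝ) < 1 by norm_num)] with t ht using key t ht)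
    have e : z - c = (z - y) - (c - y) := by abel
    have e' : y - c = -(c - y) := by abel
    rw [e, e', norm_neg, norm_sub_rev y z] at hle
    rw [inner_smul_left]
    simp only [conj_trivial]
    generalize z - y = a at *
    generalize c - y = b at *
    rw [norm_sub_sq_real, real_inner_comm] at hle
    have : (‖a‖ ^ 2 - 2 * ⟪b, a⟫ + ‖b‖ ^ 2) / (2 * τ)
        = 1 / τ / 2 * ‖a‖ ^ 2 - 1 / τ * ⟪b, a⟫ + ‖b‖ ^ 2 / (2 * τ) := by
      field_simp
    rw [this] at hle
    linarith
  · rw [smul_smul, mul_one_div_cancel hτ.ne', one_smul]; abel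

/-- Lipschitz curves in a Hilbert space are integrals of an integrable derivative. -/
lemma aux_rnp (γ : ℝ → H) (K : NNReal) (hγ : LipschitzWith K γ) (τ : ℝ) (hτ : 0 < τ) :
    IsACCurve 0 τ γ := by
  set μ : Measure ℝ := volume.restrict (Ioc 0 τ) with hμ
  have hc : Continuous γ := hγ.continuous
  let h : ℕ → ℝ := fun n => 1 / ((n : ℝ) + 1)
  have hpos : ∀ n, 0 < h n := fun n => by simp only [h]; positivity
  let g : ℕ → ℝ → H := fun n t => (h n)⁻¹ • (γ (t + h n) - γ t)
  have hgc : ∀ n, Continuous (g n) := fun n => by simp only [g]; fun_prop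
  have hgb : ∀ n t, ‖g n t‖ ≤ K := by
    intro n t
    simp only [g]
    rw [norm_smul, norm_inv, Real.norm_of_nonneg (hpos n).le, inv_mul_le_iff₀ (hpos n)]
    have := hγ.dist_le_mul (t + h n) t
    rw [dist_eq_norm, dist_eq_norm, add_sub_cancel_left, Real.norm_of_nonneg (hpos n).le] at this
    linarith
  have hmem : ∀ n, MemLp (g n) 2 μ := fun n =>
    MemLp.of_bound (hgc n).aestronglyMeasurable K (Eventually.of_forall (hgb n))
  let G : ℕ → Lp H 2 μ := fun n => (hmem n).toLp (g n)
  obtain ⟨C, hC⟩ : ∃ C : ℝ, ∀ n, ‖G n‖ ≤ C := by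
    refine ⟨_, fun n => Lp.norm_le_of_ae_bound (C := K) K.2 ?_⟩
    filter_upwards [(hmem n).coeFn_toLp] with t ht
    simp only [G]
    rw [ht]
    exact hgb n t
  let a : ℕ → WeakDual ℝ (Lp H 2 μ) := fun n => StrongDual.toWeakDual (innerSL ℝ (G n))
  have hcomp := WeakDual.isCompact_closedBall (𝕜 := ℝ) (E := Lp H 2 μ) 0 C
  obtain ⟨l, -, hl⟩ := hcomp.ultrafilter_le_nhds ((hyperfilter ℕ).map a) (by
    rw [le_principal_iff]
    refine Filter.mem_map.mpr (Filter.mem_of_superset (Filter.univ_mem) ?_)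
    intro n _
    simp only [mem_preimage, mem_closedBall_zero_iff]
    change ‖innerSL ℝ (G n)‖ ≤ C
    rw [innerSL_apply_norm]
    exact hC n)
  have hl' : Tendsto a (hyperfilter ℕ) (𝓝 l) := hl
  have hev : ∀ φ, Tendsto (fun n => ⟪G n, φ⟫) (hyperfilter ℕ) (𝓝 (l φ)) := fun φ =>
    ((WeakDual.eval_continuous φ).tendsto l).comp hl'
  let g' : Lp H 2 μ := (InnerProductSpace.toDual ℝ (Lp H 2 μ)).symm (WeakDual.toStrongDual l)
  have hg' : ∀ φ, ⟪g', φ⟫ = l φ := fun φ => InnerProductSpace.toDual_symm_apply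
  have hgint : Integrable g' μ := (Lp.memLp g').integrable (by norm_num)
  have hto : Tendsto h atTop (𝓝[≠] 0) := by
    refine tendsto_nhdsWithin_iff.mpr ⟨tendsto_one_div_add_atTop_nhds_zero_nat, ?_⟩
    exact Eventually.of_forall fun n => (hpos n).ne'
  have hslope : ∀ t, Tendsto (fun n => (h n)⁻¹ • ∫ s in t..(t + h n), γ s) atTop (𝓝 (γ t)) := by
    intro t
    have hd : HasDerivAt (fun u => ∫ s in t..u, γ s) (γ t) t :=
      intervalIntegral.integral_hasDerivAt_right (hc.intervalIntegrable _ _)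
        (hc.stronglyMeasurableAtFilter _ _) hc.continuousAt
    have := (hasDerivAt_iff_tendsto_slope_zero.mp hd).comp hto
    simpa [Function.comp_def] using this
  have hlim : ∀ t, Tendsto (fun n => ∫ s in (0 : ℝ)..t, g n s) atTop (𝓝 (γ t - γ 0)) := by
    intro t
    have := (hslope t).sub (hslope 0)
    refine this.congr fun n => ?_
    simp only [g]
    rw [intervalIntegral.integral_smul, intervalIntegral.integral_sub
      (Continuous.intervalIntegrable (by fun_prop) _ _) (hc.intervalIntegrable _ _),
      intervalIntegral.integral_comp_add_right γ, ← smul_sub]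
    congr 1
    have hi : ∀ u v, IntervalIntegrable γ volume u v := fun u v => hc.intervalIntegrable u v
    have e1 := intervalIntegral.integral_add_adjacent_intervals (hi 0 t) (hi t (t + h n))
    have e2 := intervalIntegral.integral_add_adjacent_intervals (hi 0 (0 + h n)) (hi (0 + h n) (t + h n))
    rw [sub_eq_sub_iff_add_eq_add, add_comm, e1, ← e2, add_comm]
  refine ⟨g', ?_, fun t ht => ?_⟩
  · rw [integrableOn_Icc_iff_integrableOn_Ioc]; exact hgint
  · have hset : ∀ F : ℝ → H, ∫ s in Ioc 0 t, F s ∂μ = ∫ s in (0 : ℝ)..t, F s := by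
      intro F
      rw [intervalIntegral.integral_of_le ht.1, hμ, Measure.restrict_restrict measurableSet_Ioc]
      congr 2
      exact inter_eq_left.mpr (Ioc_subset_Ioc_right ht.2)
    have hfin : μ (Ioc 0 t) ≠ ∞ := measure_ne_top _ _
    have key : ∫ s in (0 : ℝ)..t, g' s = γ t - γ 0 := by
      refine ext_inner_left ℝ fun v => ?_
      have h1 := hev (indicatorConstLp 2 measurableSet_Ioc hfin v)
      rw [← hg', real_inner_comm, L2.inner_indicatorConstLp_eq_inner_setIntegral ℝ, hset] at h1
      have h2 : Tendsto (fun n => ⟪v, ∫ s in (0 : ℝ)..t, g n s⟫) (hyperfilter ℕ)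
          (𝓝 ⟪v, γ t - γ 0⟫) :=
        ((tendsto_const_nhds (x := v)).inner (hlim t)).mono_left Nat.hyperfilter_le_atTop
      refine tendsto_nhds_unique h1 (h2.congr fun n => ?_)
      rw [real_inner_comm _ (G n), L2.inner_indicatorConstLp_eq_inner_setIntegral ℝ, ← hset]
      congr 1
      exact (integral_congr_ae (ae_restrict_of_ae (hmem n).coeFn_toLp)).symm
    rw [key]; abel

lemma aux_speed (γ : ℝ → H) (K : NNReal) (hγ : LipschitzWith K γ) (τ : ℝ)
    (g : ℝ → H) (hg : IntegrableOn g (Icc 0 τ))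
    (h : ∀ t ∈ Icc 0 τ, γ t = γ 0 + ∫ s in (0 : ℝ)..t, g s) (hτ : 0 < τ) :
    ∀ᵐ t ∂(volume.restrict (Ioc 0 τ)), ‖g t‖ ≤ K := by
  have hii : IntervalIntegrable g volume 0 τ := by
    rw [intervalIntegrable_iff_integrableOn_Icc_of_le hτ.le]; exact hg
  rw [ae_restrict_iff' measurableSet_Ioc]
  filter_upwards [hii.ae_hasDerivAt_integral, Measure.ae_ne volume τ] with t ht hne hmem
  have h1 := ht (by rw [uIcc_of_le hτ.le]; exact Ioc_subset_Icc_self hmem) 0 (by simp)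
  have h2 : HasDerivAt γ (g t) t := by
    refine (h1.const_add (γ 0)).congr_of_eventuallyEq ?_
    filter_upwards [Ioo_mem_nhds hmem.1 (lt_of_le_of_ne hmem.2 hne)] with s hs
    exact h s (Ioo_subset_Icc_self hs)
  rw [← h2.deriv]
  exact norm_deriv_le_of_lipschitz hγ

/-- the interpolation lemma with `δ = τ`. -/
theorem statement17 (lam : ℝ) (f : H → EReal)
    (hf : ProperFn f) (hconv : LambdaConvex lam f) (hlsc : LowerSemicontinuous f)
    (τ : ℝ) (hτ : 0 < τ) (hadm : 0 < 1 + τ * lam) (hb : (1 + τ * lam)⁻¹ ≤ 2)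
    (x0 xτ : H) (h0 : (subdiff lam f x0).Nonempty) (h1 : (subdiff lam f xτ).Nonempty) :
    GammaInf lam f τ x0 xτ ≤ ENNReal.ofReal
      (52 / τ * ‖xτ - x0‖ ^ 2
        + 210 * τ * max (‖gradMin lam f x0‖ ^ 2) (‖gradMin lam f xτ‖ ^ 2)) := by
  have hb' : 1 / 2 ≤ 1 + τ * lam := by
    rw [inv_le_comm₀ hadm (by norm_num)] at hb; linarith
  have hp0 := aux_gradMin_mem lam f hf x0 h0
  have hp1 := aux_gradMin_mem lam f hf xτ h1
  set p0 := gradMin lam f x0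
  set p1 := gradMin lam f xτ
  have hres := aux_resolvent lam f hf hconv hlsc τ hτ hadm x0 p0 hp0
  choose J P hP hJP using hres
  have hJlip : ∀ x y, ‖J x - J y‖ ≤ 2 * ‖x - y‖ := by
    intro x y
    have := aux_lip lam f hf τ hτ hb' (J x) (J y) (P x) (P y) (hP x) (hP y)
    rwa [hJP, hJP] at this
  have hfix : ∀ x p, p ∈ subdiff lam f x → J (x + τ • p) = x := by
    intro x p hp
    have := aux_lip lam f hf τ hτ hb' (J (x + τ • p)) x (P (x + τ • p)) p (hP _) hp
    rw [hJP, sub_self, norm_zero, mul_zero] at this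
    exact sub_eq_zero.mp (norm_le_zero_iff.mp this)
  set y0 := x0 + τ • p0
  set y1 := xτ + τ • p1
  set D := ‖y1 - y0‖
  let γ : ℝ → H := fun t => J (y0 + (t / τ) • (y1 - y0))
  have hγ0 : γ 0 = x0 := by simp only [γ]; simp [y0, hfix x0 p0 hp0]
  have hγ1 : γ τ = xτ := by
    simp only [γ]
    rw [div_self hτ.ne', one_smul, add_sub_cancel, hfix xτ p1 hp1]
  have hD0 : 0 ≤ D := norm_nonneg _
  have hK : 0 ≤ 2 * D / τ := by positivity
  have hlip : LipschitzWith ⟨2 * D / τ, hK⟩ γ := by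
    refine LipschitzWith.of_dist_le_mul fun s t => ?_
    rw [dist_eq_norm, dist_eq_norm]
    refine (hJlip _ _).trans (le_of_eq ?_)
    have : y0 + (s / τ) • (y1 - y0) - (y0 + (t / τ) • (y1 - y0)) = ((s - t) / τ) • (y1 - y0) := by
      rw [sub_div, sub_smul]; abel
    rw [this, norm_smul, norm_div, Real.norm_of_nonneg hτ.le]
    change _ = 2 * D / τ * ‖s - t‖
    simp only [D]
    ring
  have hAC : IsACCurve 0 τ γ := aux_rnp γ _ hlip τ hτ
  set M := max ‖p0‖ ‖p1‖
  have hM0 : 0 ≤ M := (norm_nonneg p0).trans (le_max_left _ _)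
  have hDle : D ≤ ‖xτ - x0‖ + 2 * τ * M := by
    have e : y1 - y0 = (xτ - x0) + (τ • p1 - τ • p0) := by simp only [y0, y1]; abel
    have a1 : D ≤ ‖xτ - x0‖ + (‖τ • p1‖ + ‖τ • p0‖) := by
      simp only [D]
      rw [e]
      exact (norm_add_le _ _).trans (by gcongr; exact norm_sub_le _ _)
    rw [norm_smul, norm_smul, Real.norm_of_nonneg hτ.le] at a1
    have a2 : τ * ‖p1‖ ≤ τ * M := by gcongr; exact le_max_right _ _
    have a3 : τ * ‖p0‖ ≤ τ * M := by gcongr; exact le_max_left _ _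
    linarith
  have hgrad : ∀ t ∈ Ioc 0 τ, gradNorm lam f (γ t) ≤ ENNReal.ofReal (M + 3 * D / τ) := by
    intro t ht
    refine (aux_gradNorm_le lam f _ _ (hP _)).trans (ENNReal.ofReal_le_ofReal ?_)
    set c := y0 + (t / τ) • (y1 - y0) with hcd
    have hc : ‖c - y0‖ ≤ D := by
      rw [hcd, add_sub_cancel_left, norm_smul, Real.norm_of_nonneg (div_nonneg ht.1.le hτ.le)]
      have : t / τ ≤ 1 := (div_le_one hτ).mpr ht.2
      calc t / τ * D ≤ 1 * D := by gcongr
        _ = D := one_mul _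
    have hJ := hJlip c y0
    rw [show J y0 = x0 from hfix x0 p0 hp0] at hJ
    have e : τ • (P c - p0) = (c - y0) - (J c - x0) := by
      have e1 : τ • P c = c - J c := by rw [eq_sub_iff_add_eq, add_comm]; exact hJP c
      rw [smul_sub, e1]; simp only [y0]; abel
    have h3 : τ * ‖P c - p0‖ ≤ 3 * D := by
      rw [← Real.norm_of_nonneg hτ.le, ← norm_smul, e]
      refine (norm_sub_le _ _).trans ?_
      linarith
    have h4 : ‖P c - p0‖ ≤ 3 * D / τ := by rw [le_div_iff₀ hτ]; linarith
    have h5 : ‖P c‖ ≤ ‖p0‖ + ‖P c - p0‖ := by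
      have := norm_add_le p0 (P c - p0)
      rwa [add_sub_cancel] at this
    have h6 : ‖p0‖ ≤ M := le_max_left _ _
    linarith
  have hmax : max (‖p0‖ ^ 2) (‖p1‖ ^ 2) = M ^ 2 := by
    rcases le_total ‖p0‖ ‖p1‖ with h | h
    · have : ‖p0‖ ^ 2 ≤ ‖p1‖ ^ 2 := by gcongr
      simp only [M]
      rw [max_eq_right h, max_eq_right this]
    · have : ‖p1‖ ^ 2 ≤ ‖p0‖ ^ 2 := by gcongr
      simp only [M]
      rw [max_eq_left h, max_eq_left this]
  refine (iInf₂_le γ ⟨hγ0, hγ1⟩).trans ?_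
  unfold actionFn
  rw [dif_pos hAC]
  have hspeed := aux_speed γ _ hlip τ hAC.choose hAC.choose_spec.1 hAC.choose_spec.2 hτ
  have hB : (0 : ℝ) ≤ M + 3 * D / τ := by positivity
  calc _ ≤ ∫⁻ _ in Ioc 0 τ, ENNReal.ofReal ((2 * D / τ) ^ 2 + (M + 3 * D / τ) ^ 2) := by
        refine lintegral_mono_ae ?_
        filter_upwards [hspeed, ae_restrict_mem measurableSet_Ioc] with t ht htm
        rw [ENNReal.ofReal_add (by positivity) (by positivity)]
        refine add_le_add (ENNReal.ofReal_le_ofReal ?_) ?_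
        · exact pow_le_pow_left₀ (norm_nonneg _) ht 2
        · rw [ENNReal.ofReal_pow hB]
          exact pow_le_pow_left₀ bot_le (hgrad t htm) 2
    _ = ENNReal.ofReal (((2 * D / τ) ^ 2 + (M + 3 * D / τ) ^ 2) * τ) := by
        rw [lintegral_const, Measure.restrict_apply_univ, Real.volume_Ioc, sub_zero,
          ← ENNReal.ofReal_mul (by positivity)]
    _ ≤ _ := by
        apply ENNReal.ofReal_le_ofReal
        rw [hmax]
        set d := ‖xτ - x0‖
        have hd : 0 ≤ d := norm_nonneg _
        have e : 52 / τ * d ^ 2 + 210 * τ * M ^ 2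
            = (52 * (d / τ) ^ 2 + 210 * M ^ 2) * τ := by field_simp
        rw [e]
        refine mul_le_mul_of_nonneg_right ?_ hτ.le
        have hE : D / τ ≤ d / τ + 2 * M := by
          have : d / τ + 2 * M = (d + 2 * τ * M) / τ := by field_simp
          rw [this]
          gcongr
        have hE0 : 0 ≤ D / τ := by positivity
        have hq0 : 0 ≤ d / τ := by positivity
        rw [mul_div_assoc, mul_div_assoc]
        generalize D / τ = E at *
        generalize d / τ = q at *
        have s1 : (2 * E) ^ 2 ≤ (2 * (q + 2 * M)) ^ 2 := by gcongr
        have s2 : (M + 3 * E) ^ 2 ≤ (M + 3 * (q + 2 * M)) ^ 2 := by gcongr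
        nlinarith [sq_nonneg (q - M), sq_nonneg q, sq_nonneg M, sq_nonneg (q - 2 * M),
          sq_nonneg (3 * q - 7 * M)]

end
end

section
/- Let H be a real Hilbert space, λ ∈ ℝ, and let (f_h) be a sequence of proper, λ-convex, lower semicontinuous functions f_h : H → (-∞,∞] that Mosco-converges to a proper, λ-convex, lower semicontinuous function f : H → (-∞,∞]. Let τ > 0 be admissible, i.e. τ < −1/λ if λ < 0. Then for every x ∈ H: (i) the Moreau–Yosida regularizations converge, lim_h (f_h)_τ(x) = f_τ(x); and (ii) the resolvents converge strongly, lim_h J_{f_h,τ}(x) = J_{f,τ}(x) in the norm of H. -/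
open Filter Topology MeasureTheory Set
open scoped ENNReal RealInnerProductSpace

noncomputable section

attribute [local instance] Classical.propDecidable

variable {H : Type*} [NormedAddCommGroup H] [InnerProductSpace ℝ H] [CompleteSpace H]

/-- Strong convexity in terms of real upper bounds. -/
def SCx (μ : ℝ) (G : H → EReal) : Prop :=
  ∀ (y z : H) (a b t : ℝ), 0 ≤ t → t ≤ 1 → G y ≤ (a : EReal) → G z ≤ (b : EReal) →
    G ((1 - t) • y + t • z)
      ≤ (((1 - t) * a + t * b - μ / 2 * (t * (1 - t)) * ‖y - z‖ ^ 2 : ℝ) : EReal)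

lemma exists_real_of_le {u : EReal} {q a : ℝ} (hb : u ≠ ⊥) (h : u + (q : EReal) ≤ (a : EReal)) :
    ∃ v : ℝ, u = v ∧ v + q ≤ a := by
  induction u with
  | bot => exact absurd rfl hb
  | top => simp at h
  | coe v => exact ⟨v, rfl, by exact_mod_cast h⟩

lemma norm_sq_comb (u v : H) (t : ℝ) :
    ‖(1 - t) • u + t • v‖ ^ 2 = (1 - t) * ‖u‖ ^ 2 + t * ‖v‖ ^ 2 - t * (1 - t) * ‖u - v‖ ^ 2 := by
  rw [norm_add_sq_real, norm_sub_sq_real, norm_smul, norm_smul, inner_smul_left, inner_smul_right,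
    mul_pow, mul_pow, Real.norm_eq_abs, Real.norm_eq_abs, sq_abs, sq_abs]
  simp
  ring

lemma scx_of_lambdaConvex {lam τ : ℝ} (hτ : 0 < τ) {f : H → EReal} (hp : ∀ y, f y ≠ ⊥)
    (hc : LambdaConvex lam f) (x : H) :
    SCx (lam + 1 / τ) (fun y => f y + ((‖y - x‖ ^ 2 / (2 * τ) : ℝ) : EReal)) := by
  intro y z a b t ht0 ht1 hy hz
  obtain ⟨v, hv, hva⟩ := exists_real_of_le (hp y) hy
  obtain ⟨w, hw, hwb⟩ := exists_real_of_le (hp z) hz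
  have h := hc y z t ht0 ht1
  rw [hv, hw] at h
  have h' : f ((1 - t) • y + t • z) ≤
      (((1 - t) * v + t * w - lam / 2 * (t * (1 - t)) * ‖y - z‖ ^ 2 : ℝ) : EReal) := by
    exact_mod_cast h
  refine (add_le_add_left h' _).trans ?_
  rw [← EReal.coe_add, EReal.coe_le_coe_iff]
  have e : (1 - t) • y + t • z - x = (1 - t) • (y - x) + t • (z - x) := by module
  have e2 : y - x - (z - x) = y - z := by abel
  rw [e, norm_sq_comb, e2]
  have h1 := mul_le_mul_of_nonneg_left hva (sub_nonneg.2 ht1)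
  have h2 := mul_le_mul_of_nonneg_left hwb ht0
  have e3 : ((1 - t) * ‖y - x‖ ^ 2 + t * ‖z - x‖ ^ 2 - t * (1 - t) * ‖y - z‖ ^ 2) / (2 * τ)
     = (1 - t) * (‖y - x‖ ^ 2 / (2 * τ)) + t * (‖z - x‖ ^ 2 / (2 * τ))
       - 1 / τ / 2 * (t * (1 - t)) * ‖y - z‖ ^ 2 := by
    field_simp
  rw [e3]
  linarith

/-- Quantitative coercivity. -/
lemma scx_coercive {μ : ℝ} {G : H → EReal} (hG : SCx μ G) {x0 : H} {a c r : ℝ} (hr : 0 < r)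
    (ha : G x0 ≤ a) (hc : ∀ y, ‖y - x0‖ ≤ r → (c : EReal) ≤ G y) {y : H} {b : ℝ}
    (hb : G y ≤ b) (hD : r ≤ ‖y - x0‖) :
    a + ‖y - x0‖ / r * (c - a) + μ / 2 * (‖y - x0‖ ^ 2 - r * ‖y - x0‖) ≤ b := by
  set D := ‖y - x0‖ with hDdef
  have hDpos : 0 < D := hr.trans_le hD
  have hs1 : r / D ≤ 1 := (div_le_one hDpos).2 hD
  have h := hG x0 y a b (r / D) (by positivity) hs1 ha hb
  have hn : ‖(1 - r / D) • x0 + (r / D) • y - x0‖ ≤ r := by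
    have : (1 - r / D) • x0 + (r / D) • y - x0 = (r / D) • (y - x0) := by module
    rw [this, norm_smul, Real.norm_of_nonneg (by positivity), ← hDdef]
    exact (div_mul_cancel₀ _ hDpos.ne').le
  have h2 := (hc _ hn).trans h
  rw [EReal.coe_le_coe_iff, norm_sub_rev x0 y, ← hDdef] at h2
  have h3 := mul_le_mul_of_nonneg_left h2 (by positivity : 0 ≤ D / r)
  have e : D / r * ((1 - r / D) * a + r / D * b - μ / 2 * (r / D * (1 - r / D)) * D ^ 2)
    = D / r * a - a + b - μ / 2 * (D ^ 2 - r * D) := by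
    field_simp
  rw [e] at h3
  linarith

lemma scx_min {μ : ℝ} {G : H → EReal} (hG : SCx μ G) {y z : H} {a b : ℝ}
    (ha : G y = a) (hmin : ∀ z, G y ≤ G z) (hb : G z ≤ b) : a + μ / 4 * ‖z - y‖ ^ 2 ≤ b := by
  have h := (hmin _).trans (hG y z a b (1 / 2) (by norm_num) (by norm_num) ha.le hb)
  rw [ha, EReal.coe_le_coe_iff, norm_sub_rev] at h
  linarith

lemma scx_exists_min {μ : ℝ} (hμ : 0 < μ) {G : H → EReal} (hG : SCx μ G) (hp : ∀ y, G y ≠ ⊥)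
    (hne : ∃ y, G y ≠ ⊤) (hlsc : LowerSemicontinuous G) :
    ∃ y, ∀ z, G y ≤ G z := by
  obtain ⟨x0, hx0⟩ := hne
  obtain ⟨a, ha⟩ : ∃ a : ℝ, G x0 = a := ⟨_, (EReal.coe_toReal hx0 (hp x0)).symm⟩
  -- local lower bound
  have hev := hlsc x0 ((a - 1 : ℝ) : EReal) (by
    change ((a - 1 : ℝ) : EReal) < G x0
    rw [ha, EReal.coe_lt_coe_iff]; linarith)
  obtain ⟨r, hr, hball⟩ := Metric.nhds_basis_closedBall.mem_iff.1 hev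
  have hc : ∀ y, ‖y - x0‖ ≤ r → ((a - 1 : ℝ) : EReal) ≤ G y := fun y hy =>
    le_of_lt (hball (by simpa [dist_eq_norm] using hy))
  -- global lower bound
  let S : Set ℝ := {b | ∃ y, G y ≤ (b : EReal)}
  have hSne : S.Nonempty := ⟨a, x0, ha.le⟩
  have hSb : BddBelow S := by
    refine ⟨a - 1 - (1 / r + μ * r / 2) ^ 2 / (2 * μ), ?_⟩
    rintro b ⟨y, hy⟩
    rcases le_total ‖y - x0‖ r with h | h
    · have h1 : a - 1 ≤ b := by exact_mod_cast (hc y h).trans hy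
      have : 0 ≤ (1 / r + μ * r / 2) ^ 2 / (2 * μ) := by positivity
      linarith
    · have h1 := scx_coercive hG hr ha.le hc hy h
      set D := ‖y - x0‖
      have h2 : 0 ≤ (μ * D - (1 / r + μ * r / 2)) ^ 2 / (2 * μ) := by positivity
      have e : (μ * D - (1 / r + μ * r / 2)) ^ 2 / (2 * μ)
        = μ / 2 * D ^ 2 - D * (1 / r + μ * r / 2) + (1 / r + μ * r / 2) ^ 2 / (2 * μ) := by
        field_simp
        ring
      have e2 : D / r * (a - 1 - a) = - (D * (1 / r)) := by ring
      rw [e2] at h1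
      rw [e] at h2
      linarith
  set m := sInf S with hm
  have hmle : ∀ b y, G y ≤ ((b : ℝ) : EReal) → m ≤ b := fun b y h => csInf_le hSb ⟨y, h⟩
  have hex : ∀ n : ℕ, ∃ y, G y ≤ ((m + 1 / ((n : ℝ) + 1) : ℝ) : EReal) := by
    intro n
    obtain ⟨b, ⟨y, hy⟩, hb⟩ := exists_lt_of_csInf_lt hSne
      (show sInf S < m + 1 / ((n : ℝ) + 1) by
        have : 0 < 1 / ((n : ℝ) + 1) := by positivity
        linarith)
    exact ⟨y, hy.trans (by exact_mod_cast hb.le)⟩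
  choose u hu using hex
  have hdist : ∀ i j N : ℕ, N ≤ i → N ≤ j → ‖u i - u j‖ ^ 2 ≤ 8 / μ * (1 / ((N : ℝ) + 1)) := by
    intro i j N hi hj
    have hb : ∀ k, N ≤ k → G (u k) ≤ ((m + 1 / ((N : ℝ) + 1) : ℝ) : EReal) := fun k hk => by
      refine (hu k).trans ?_
      rw [EReal.coe_le_coe_iff]
      have : (N : ℝ) ≤ k := by exact_mod_cast hk
      gcongr
    have h := hmle _ _ (hG _ _ _ _ (1 / 2) (by norm_num) (by norm_num) (hb i hi) (hb j hj))
    have h3 : μ / 8 * ‖u i - u j‖ ^ 2 ≤ 1 / ((N : ℝ) + 1) := by linarith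
    have h4 := mul_le_mul_of_nonneg_left h3 (by positivity : 0 ≤ 8 / μ)
    have e : 8 / μ * (μ / 8 * ‖u i - u j‖ ^ 2) = ‖u i - u j‖ ^ 2 := by field_simp
    rwa [e] at h4
  have hcau : CauchySeq u := by
    refine cauchySeq_of_le_tendsto_0 (fun N : ℕ => √(8 / μ * (1 / ((N : ℝ) + 1)))) ?_ ?_
    · intro i j N hi hj
      rw [dist_eq_norm]
      exact Real.le_sqrt_of_sq_le (hdist i j N hi hj)
    · have h1 := (tendsto_one_div_add_atTop_nhds_zero_nat (𝕜 := ℝ)).const_mul (8 / μ)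
      have h2 := (Real.continuous_sqrt.tendsto _).comp h1
      simpa [Function.comp_def] using h2
  obtain ⟨y, hy⟩ := cauchySeq_tendsto_of_complete hcau
  refine ⟨y, fun z => ?_⟩
  have hym : G y ≤ m := by
    refine le_of_forall_lt fun c hc' => ?_
    by_contra hcm
    push Not at hcm
    obtain ⟨d, hd1, hd2⟩ := EReal.exists_between_coe_real hc'
    have hmd : m < d := by exact_mod_cast hcm.trans_lt hd1
    have h1 := hy.eventually (hlsc y d hd2)
    have h2 : ∀ᶠ n : ℕ in atTop, m + 1 / ((n : ℝ) + 1) < d := by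
      have := (tendsto_one_div_add_atTop_nhds_zero_nat (𝕜 := ℝ)).const_add m
      rw [add_zero] at this
      exact this.eventually (gt_mem_nhds hmd)
    obtain ⟨n, h3, h4⟩ := (h1.and h2).exists
    have h5 := h3.trans_le (hu n)
    rw [EReal.coe_lt_coe_iff] at h5
    linarith
  refine hym.trans ?_
  by_cases hz : G z = ⊤
  · rw [hz]; exact le_top
  · have e := EReal.coe_toReal hz (hp z)
    rw [← e, EReal.coe_le_coe_iff]
    exact hmle _ z e.ge

/-- Bounded sequences in a Hilbert space have weakly convergent subsequences. -/
lemma exists_weak_subseq {y : ℕ → H} {R : ℝ} (hR : ∀ n, ‖y n‖ ≤ R) :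
    ∃ (φ : ℕ → ℕ) (z : H), StrictMono φ ∧
      ∀ p : H, Tendsto (fun n => ⟪y (φ n), p⟫) atTop (𝓝 ⟪z, p⟫) := by
  let K : Submodule ℝ H := (Submodule.span ℝ (range y)).topologicalClosure
  have hsep : TopologicalSpace.IsSeparable (K : Set H) := by
    have : TopologicalSpace.IsSeparable (range y) := (countable_range y).isSeparable
    have := (this.span (R := ℝ)).closure
    simpa [K] using this
  have : TopologicalSpace.SeparableSpace K := hsep.separableSpace
  have : CompleteSpace K := (Submodule.isClosed_topologicalClosure _).completeSpace_coe
  have hyK : ∀ n, y n ∈ K := fun n =>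
    Submodule.le_topologicalClosure _ (Submodule.subset_span (mem_range_self n))
  let T : ℕ → WeakDual ℝ K := fun n =>
    StrongDual.toWeakDual (InnerProductSpace.toDual ℝ K ⟨y n, hyK n⟩)
  have hT : ∀ n, T n ∈ (WeakDual.toStrongDual ⁻¹' Metric.closedBall (0 : StrongDual ℝ K) R) := by
    intro n
    rw [mem_preimage]
    have h : ‖InnerProductSpace.toDual ℝ K ⟨y n, hyK n⟩‖ ≤ R := by
      rw [LinearIsometryEquiv.norm_map]
      exact hR n
    exact (mem_closedBall_zero_iff (E := StrongDual ℝ K)).2 h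
  obtain ⟨L, -, φ, hφ, hlim⟩ := WeakDual.isSeqCompact_closedBall ℝ K 0 R hT
  let z : K := (InnerProductSpace.toDual ℝ K).symm (WeakDual.toStrongDual L)
  refine ⟨φ, z, hφ, fun p => ?_⟩
  have h1 := ((WeakDual.eval_continuous (𝕜 := ℝ) (K.orthogonalProjectionOnto p)).tendsto L).comp hlim
  have key : ∀ w : K, ⟪(w : H), p⟫ = ⟪w, K.orthogonalProjectionOnto p⟫ := by
    intro w
    rw [Submodule.inner_orthogonalProjectionOnto_eq_of_mem_left]
  have e1 : ⟪(z : H), p⟫ = L (K.orthogonalProjectionOnto p) := by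
    rw [key]
    exact InnerProductSpace.toDual_symm_apply
  have e2 : ∀ n, ⟪y (φ n), p⟫ = T (φ n) (K.orthogonalProjectionOnto p) := by
    intro n
    exact key ⟨y (φ n), hyK _⟩
  rw [e1]
  simp_rw [e2]
  exact h1

/-- Abstract convergence of minima and minimizers. -/
lemma abstract_conv {μ : ℝ} (hμ : 0 < μ) {Gh : ℕ → H → EReal} {G : H → EReal}
    (hG : ∀ h, SCx μ (Gh h)) {y : ℕ → H} {a : ℕ → ℝ} {y0 : H} {a0 : ℝ}
    (ha : ∀ h, Gh h (y h) = a h) (hmin : ∀ h z, Gh h (y h) ≤ Gh h z)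
    (ha0 : G y0 = a0) (hmin0 : ∀ z, G y0 ≤ G z) {xh : ℕ → H} (hxh : Tendsto xh atTop (𝓝 y0))
    (hrec : ∀ ε > 0, ∀ᶠ h in atTop, Gh h (xh h) ≤ ((a0 + ε : ℝ) : EReal))
    (hinf : ∀ (φ : ℕ → ℕ) (z : ℕ → H) (w : H) (c : ℝ), StrictMono φ →
      (∀ p : H, Tendsto (fun n => ⟪z n, p⟫) atTop (𝓝 ⟪w, p⟫)) →
      (∀ᶠ k in atTop, Gh (φ k) (z k) ≤ c) → G w ≤ c) :
    Tendsto a atTop (𝓝 a0) ∧ Tendsto y atTop (𝓝 y0) := by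
  have hup : ∀ ε > 0, ∀ᶠ h in atTop, a h + μ / 4 * ‖xh h - y h‖ ^ 2 ≤ a0 + ε := by
    intro ε hε
    filter_upwards [hrec ε hε] with h hh
    exact scx_min (hG h) (ha h) (hmin h) hh
  have hup' : ∀ ε > 0, ∀ᶠ h in atTop, a h ≤ a0 + ε := by
    intro ε hε
    filter_upwards [hup ε hε] with h hh
    have : 0 ≤ μ / 4 * ‖xh h - y h‖ ^ 2 := by positivity
    linarith
  -- uniform local lower bound
  have hloc : ∃ n : ℕ, ∀ᶠ h in atTop, ∀ w, ‖w - y0‖ ≤ 1 / ((n : ℝ) + 1) →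
      ((-(n : ℝ) : ℝ) : EReal) ≤ Gh h w := by
    by_contra hcon
    push Not at hcon
    obtain ⟨φ, hφ, hP⟩ := extraction_forall_of_frequently hcon
    choose z hz1 hz2 using hP
    have hz : Tendsto z atTop (𝓝 y0) := by
      rw [tendsto_iff_norm_sub_tendsto_zero]
      exact squeeze_zero (fun _ => norm_nonneg _) hz1
        (tendsto_one_div_add_atTop_nhds_zero_nat (𝕜 := ℝ))
    have := hinf φ z y0 (a0 - 1) hφ (fun p => hz.inner tendsto_const_nhds) (by
      filter_upwards [(tendsto_natCast_atTop_atTop (R := ℝ)).eventually_ge_atTop (1 - a0)] with k hk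
      refine (hz2 k).le.trans ?_
      rw [EReal.coe_le_coe_iff]
      linarith)
    rw [ha0, EReal.coe_le_coe_iff] at this
    linarith
  obtain ⟨n, hn⟩ := hloc
  set c : ℝ := -(n : ℝ)
  obtain ⟨r, hr, hrdef⟩ : ∃ r : ℝ, 0 < r ∧ 2 * r = 1 / ((n : ℝ) + 1) :=
    ⟨1 / ((n : ℝ) + 1) / 2, by positivity, by ring⟩
  obtain ⟨R, hR⟩ : ∃ R : ℝ, ∀ᶠ h in atTop, ‖y h‖ ≤ R := by
    refine ⟨max r (r + 2 * (a0 + 1 - c) / (r * μ)) + (‖y0‖ + r), ?_⟩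
    filter_upwards [hn, hup' 1 one_pos, hrec 1 one_pos,
      (tendsto_iff_norm_sub_tendsto_zero.1 hxh).eventually (ge_mem_nhds hr)] with h h1 h2 h3 h4
    have hD : ‖y h - xh h‖ ≤ max r (r + 2 * (a0 + 1 - c) / (r * μ)) := by
      rcases le_total ‖y h - xh h‖ r with hle | hle
      · exact hle.trans (le_max_left _ _)
      · refine le_trans ?_ (le_max_right _ _)
        have hb : Gh h (y h) ≤ ((a0 + 1 : ℝ) : EReal) := by
          rw [ha]; exact_mod_cast h2
        have h5 := scx_coercive (hG h) hr h3 (c := c) (fun w hw => h1 w (by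
          have : w - y0 = (w - xh h) + (xh h - y0) := by abel
          rw [this]
          refine (norm_add_le _ _).trans ?_
          linarith)) hb hle
        set D := ‖y h - xh h‖
        have hDp : 0 < D := hr.trans_le hle
        have e : D / r * (c - (a0 + 1)) + μ / 2 * (D ^ 2 - r * D)
          = (D * μ / 2) * (D - (r + 2 * (a0 + 1 - c) / (r * μ))) := by
          field_simp
          ring
        have h6 : (D * μ / 2) * (D - (r + 2 * (a0 + 1 - c) / (r * μ))) ≤ 0 := by
          rw [← e]; linarith
        have h7 := nonpos_of_mul_nonpos_right h6 (by positivity)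
        linarith
    have h8 : y h = (y h - xh h) + ((xh h - y0) + y0) := by abel
    have h9 := norm_add_le (y h - xh h) ((xh h - y0) + y0)
    have h10 := norm_add_le (xh h - y0) y0
    rw [← h8] at h9
    linarith
  -- lower bound of minima
  have hlow : ∀ ε > 0, ∀ᶠ h in atTop, a0 - ε ≤ a h := by
    intro ε hε
    by_contra hcon
    have hfr : ∃ᶠ h in atTop, a h < a0 - ε := by
      simpa [Filter.Frequently] using hcon
    obtain ⟨φ, hφ, hP⟩ := extraction_of_frequently_atTop (hfr.and_eventually hR)
    obtain ⟨ψ, w, hψ, hw⟩ := exists_weak_subseq (y := fun k => y (φ k)) (fun k => (hP k).2)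
    have h1 := hinf (φ ∘ ψ) (fun k => y (φ (ψ k))) w (a0 - ε) (hφ.comp hψ) hw
      (Eventually.of_forall fun k => by
        simp only [Function.comp_apply, ha]
        exact_mod_cast (hP (ψ k)).1.le)
    have h2 := (hmin0 w).trans h1
    rw [ha0, EReal.coe_le_coe_iff] at h2
    linarith
  refine ⟨?_, ?_⟩
  · rw [Metric.tendsto_nhds]
    intro ε hε
    filter_upwards [hup' (ε / 2) (by linarith), hlow (ε / 2) (by linarith)] with h h1 h2
    rw [Real.dist_eq, abs_lt]
    constructor <;> linarith
  · have hz : Tendsto (fun h => xh h - y h) atTop (𝓝 0) := by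
      rw [Metric.tendsto_nhds]
      intro ε hε
      have hδ : 0 < μ / 16 * ε ^ 2 := by positivity
      filter_upwards [hup _ hδ, hlow _ hδ] with h h1 h2
      rw [dist_zero_right]
      refine lt_of_pow_lt_pow_left₀ 2 hε.le ?_
      have h3 : μ / 4 * ‖xh h - y h‖ ^ 2 ≤ μ / 4 * (ε ^ 2 / 2) := by linarith
      have h4 := le_of_mul_le_mul_left h3 (by positivity)
      have : 0 < ε ^ 2 := by positivity
      linarith
    simpa using hxh.sub hz

lemma mosco_subseq {fh : ℕ → H → EReal} {f : H → EReal} (hM : Mosco fh f) {φ : ℕ → ℕ}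
    (hφ : StrictMono φ) {z : ℕ → H} {w : H}
    (hz : ∀ p : H, Tendsto (fun n => ⟪z n, p⟫) atTop (𝓝 ⟪w, p⟫)) {c : ℝ}
    (hc : ∀ᶠ k in atTop, fh (φ k) (z k) ≤ c) : f w ≤ c := by
  let Z : ℕ → H := fun h => if hh : ∃ k, φ k = h then z hh.choose else w
  have hZ : ∀ k, Z (φ k) = z k := by
    intro k
    have hh : ∃ j, φ j = φ k := ⟨k, rfl⟩
    simp only [Z, dif_pos hh]
    exact congrArg z (hφ.injective hh.choose_spec)
  have hZw : ∀ p : H, Tendsto (fun n => ⟪Z n, p⟫) atTop (𝓝 ⟪w, p⟫) := by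
    intro p
    rw [Filter.tendsto_def]
    intro s hs
    obtain ⟨N, hN⟩ := eventually_atTop.1 ((hz p).eventually hs)
    refine mem_atTop_sets.2 ⟨φ N, fun h hh => ?_⟩
    by_cases hk : ∃ k, φ k = h
    · obtain ⟨k, rfl⟩ := hk
      rw [mem_preimage, hZ]
      exact hN k (hφ.le_iff_le.1 hh)
    · simp only [mem_preimage, Z, dif_neg hk]
      exact mem_of_mem_nhds hs
  refine (hM.2 Z w hZw).trans ?_
  refine Filter.liminf_le_of_frequently_le' ?_
  refine hφ.tendsto_atTop.frequently ?_
  refine Eventually.frequently ?_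
  filter_upwards [hc] with k hk
  rw [hZ]; exact hk

lemma mosco_quad {fh : ℕ → H → EReal} {f : H → EReal} (hM : Mosco fh f)
    (hp : ∀ h y, fh h y ≠ ⊥) {τ : ℝ} (hτ : 0 < τ) (x : H) {φ : ℕ → ℕ}
    (hφ : StrictMono φ) {z : ℕ → H} {w : H}
    (hz : ∀ p : H, Tendsto (fun n => ⟪z n, p⟫) atTop (𝓝 ⟪w, p⟫)) {c : ℝ}
    (hc : ∀ᶠ k in atTop, fh (φ k) (z k) + ((‖z k - x‖ ^ 2 / (2 * τ) : ℝ) : EReal) ≤ c) :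
    f w + ((‖w - x‖ ^ 2 / (2 * τ) : ℝ) : EReal) ≤ c := by
  have key : ∀ ε > 0, f w ≤ ((c - ‖w - x‖ ^ 2 / (2 * τ) + ε : ℝ) : EReal) := by
    intro ε hε
    refine mosco_subseq hM hφ hz ?_
    have h0 : ∀ᶠ k in atTop, ⟪w, w - x⟫ - τ * ε < ⟪z k, w - x⟫ :=
      (hz (w - x)).eventually (lt_mem_nhds (by
        have : 0 < τ * ε := by positivity
        linarith))
    filter_upwards [hc, h0] with k hk h1
    obtain ⟨v, hv, hvc⟩ := exists_real_of_le (hp _ _) hk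
    rw [hv, EReal.coe_le_coe_iff]
    have e : z k - x = (w - x) + (z k - w) := by abel
    have h2 : ‖w - x‖ ^ 2 - 2 * (τ * ε) ≤ ‖z k - x‖ ^ 2 := by
      rw [e, norm_add_sq_real, real_inner_comm, inner_sub_left]
      have := sq_nonneg ‖z k - w‖
      linarith
    have h3 := div_le_div_of_nonneg_right h2 (by positivity : 0 ≤ 2 * τ)
    have e3 : (‖w - x‖ ^ 2 - 2 * (τ * ε)) / (2 * τ) = ‖w - x‖ ^ 2 / (2 * τ) - ε := by
      field_simp
    rw [e3] at h3
    linarith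
  set q := ‖w - x‖ ^ 2 / (2 * τ)
  generalize f w = u at key
  induction u with
  | bot => simp
  | top => exact absurd (top_le_iff.1 (key 1 one_pos)) (EReal.coe_ne_top _)
  | coe v =>
    rw [← EReal.coe_add, EReal.coe_le_coe_iff]
    refine le_of_forall_pos_le_add fun ε hε => ?_
    have := key ε hε
    rw [EReal.coe_le_coe_iff] at this
    linarith

lemma jres_spec {lam τ : ℝ} (hτ : 0 < τ) (hμ : 0 < lam + 1 / τ) {f : H → EReal}
    (hp : ProperFn f) (hc : LambdaConvex lam f) (hlsc : LowerSemicontinuous f) (x : H) :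
    (f (Jres f τ x) + ((‖Jres f τ x - x‖ ^ 2 / (2 * τ) : ℝ) : EReal) = (moreau f τ x : EReal)) ∧
    ∀ z, f (Jres f τ x) + ((‖Jres f τ x - x‖ ^ 2 / (2 * τ) : ℝ) : EReal)
      ≤ f z + ((‖z - x‖ ^ 2 / (2 * τ) : ℝ) : EReal) := by
  obtain ⟨x0, hx0⟩ := hp.1
  have hex : ∃ y : H, ∀ z : H, f y + ((‖y - x‖ ^ 2 / (2 * τ) : ℝ) : EReal)
        ≤ f z + ((‖z - x‖ ^ 2 / (2 * τ) : ℝ) : EReal) := by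
    refine scx_exists_min hμ (scx_of_lambdaConvex hτ hp.2 hc x) ?_ ⟨x0, ?_⟩ ?_
    · intro y
      simpa [EReal.add_eq_bot_iff] using hp.2 y
    · exact EReal.add_ne_top hx0 (EReal.coe_ne_top _)
    · refine hlsc.add' (g := fun y => ((‖y - x‖ ^ 2 / (2 * τ) : ℝ) : EReal)) ?_ ?_
      · refine Continuous.lowerSemicontinuous ?_
        exact continuous_coe_real_ereal.comp (by fun_prop)
      · intro y
        exact EReal.continuousAt_add (Or.inr (EReal.coe_ne_bot _)) (Or.inr (EReal.coe_ne_top _))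
  have hmin : ∀ z, f (Jres f τ x) + ((‖Jres f τ x - x‖ ^ 2 / (2 * τ) : ℝ) : EReal)
      ≤ f z + ((‖z - x‖ ^ 2 / (2 * τ) : ℝ) : EReal) := by
    rw [Jres, dif_pos hex]
    exact hex.choose_spec
  refine ⟨?_, hmin⟩
  have h1 := hmin x0
  rw [← EReal.coe_toReal hx0 (hp.2 x0), ← EReal.coe_add] at h1
  obtain ⟨v, hv, -⟩ := exists_real_of_le (hp.2 _) h1
  rw [moreau, hv, EReal.toReal_coe, EReal.coe_add]

/-- Mosco convergence implies convergence of the Moreau–Yosida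
regularizations and of the resolvents. -/
theorem statement18 (lam : ℝ) (fh : ℕ → H → EReal) (f : H → EReal)
    (hfh_proper : ∀ h, ProperFn (fh h)) (hfh_conv : ∀ h, LambdaConvex lam (fh h))
    (hfh_lsc : ∀ h, LowerSemicontinuous (fh h))
    (hf_proper : ProperFn f) (hf_conv : LambdaConvex lam f) (hf_lsc : LowerSemicontinuous f)
    (hM : Mosco fh f)
    (τ : ℝ) (hτ : 0 < τ) (hadm : lam < 0 → τ < -1 / lam) (x : H) :
    Tendsto (fun h => moreau (fh h) τ x) atTop (𝓝 (moreau f τ x)) ∧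
    Tendsto (fun h => Jres (fh h) τ x) atTop (𝓝 (Jres f τ x)) := by
  have hμ : 0 < lam + 1 / τ := by
    rcases le_or_gt 0 lam with h | h
    · positivity
    · have h1 := hadm h
      rw [lt_div_iff_of_neg h] at h1
      have : lam + 1 / τ = (τ * lam + 1) / τ := by field_simp
      rw [this]
      apply div_pos _ hτ
      linarith
  have hJ := fun h => jres_spec hτ hμ (hfh_proper h) (hfh_conv h) (hfh_lsc h) x
  obtain ⟨hJ0, hmin0⟩ := jres_spec hτ hμ hf_proper hf_conv hf_lsc x
  obtain ⟨xh, hxh, hls⟩ := hM.1 (Jres f τ x)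
  refine abstract_conv hμ (Gh := fun h y => fh h y + ((‖y - x‖ ^ 2 / (2 * τ) : ℝ) : EReal))
    (G := fun y => f y + ((‖y - x‖ ^ 2 / (2 * τ) : ℝ) : EReal))
    (fun h => scx_of_lambdaConvex hτ (hfh_proper h).2 (hfh_conv h) x)
    (fun h => (hJ h).1) (fun h => (hJ h).2) hJ0 hmin0 hxh ?_ ?_
  · intro ε hε
    obtain ⟨v, hv, -⟩ := exists_real_of_le (hf_proper.2 _) hJ0.le
    rw [hv] at hls
    have hJ1 : v + ‖Jres f τ x - x‖ ^ 2 / (2 * τ) = moreau f τ x := by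
      rw [hv] at hJ0
      exact_mod_cast hJ0
    have h1 : ∀ᶠ h in atTop, fh h (xh h) < ((v + ε / 2 : ℝ) : EReal) :=
      Filter.eventually_lt_of_limsup_lt (hls.trans_lt (by
        rw [EReal.coe_lt_coe_iff]; linarith))
    have h2 : Tendsto (fun h => ‖xh h - x‖ ^ 2 / (2 * τ)) atTop
        (𝓝 (‖Jres f τ x - x‖ ^ 2 / (2 * τ))) :=
      (((hxh.sub_const x).norm).pow 2).div_const _
    have h3 : ∀ᶠ h in atTop, ‖xh h - x‖ ^ 2 / (2 * τ)
        < ‖Jres f τ x - x‖ ^ 2 / (2 * τ) + ε / 2 :=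
      h2.eventually (gt_mem_nhds (by linarith))
    filter_upwards [h1, h3] with h h4 h5
    refine (add_le_add_left h4.le _).trans ?_
    rw [← EReal.coe_add, EReal.coe_le_coe_iff]
    linarith
  · intro φ z w c hφ hz hc
    exact mosco_quad hM (fun h => (hfh_proper h).2) hτ x hφ hz hc

end
end

section
/- Let H be a real Hilbert space, λ ∈ ℝ, and let (f_h) be a sequence of proper, λ-convex, lower semicontinuous functions f_h : H → (-∞,∞] that Mosco-converges to a proper, λ-convex, lower semicontinuous function f : H → (-∞,∞]. Let τ > 0 be admissible, i.e. τ < −1/λ if λ < 0, and let γ : [0,1] → H be absolutely continuous with I_f(γ) < ∞. Define γ_h^τ(t) := J_{f_h,τ}(γ(t)). Then each γ_h^τ is absolutely continuous and limsup_h ∫₀¹ (‖γ̇_h^τ(t)‖² + |∇f_h|²(γ_h^τ(t))) dt ≤ (1 + τλ)^{-2} ∫₀¹ (‖γ̇(t)‖² + |∇f|²(γ(t))) dt. -/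
open Filter Topology MeasureTheory Set
open scoped ENNReal RealInnerProductSpace

noncomputable section

attribute [local instance] Classical.propDecidable

variable {H : Type*} [NormedAddCommGroup H] [InnerProductSpace ℝ H] [CompleteSpace H]

set_option linter.unusedSectionVars false

lemma proper_real {f : H → EReal} (hp : ProperFn f) {x : H} (hx : f x ≠ ⊤) :
    ∃ a : ℝ, f x = a := ⟨(f x).toReal, (EReal.coe_toReal hx (hp.2 x)).symm⟩

lemma lc_real {lam : ℝ} {f : H → EReal} (hc : LambdaConvex lam f) {x y : H} {a b t : ℝ}
    (hx : f x = a) (hy : f y = b) (h0 : 0 ≤ t) (h1 : t ≤ 1) :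
    f ((1 - t) • x + t • y) ≤
      (((1 - t) * a + t * b - lam / 2 * (t * (1 - t)) * ‖x - y‖ ^ 2 : ℝ) : EReal) := by
  have := hc x y t h0 h1
  rw [hx, hy] at this
  exact_mod_cast this

lemma bddBelow_strong {μ : ℝ} {F : H → EReal} (hp : ProperFn F) (hc : LambdaConvex μ F)
    (hl : LowerSemicontinuous F) (hμ : 0 < μ) : ∃ m : ℝ, ∀ z, (m : EReal) ≤ F z := by
  obtain ⟨x0, hx0⟩ := hp.1
  obtain ⟨a, ha⟩ := proper_real hp hx0
  have h1 : ((a - 1 : ℝ) : EReal) < F x0 := by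
    rw [ha]; exact_mod_cast sub_one_lt a
  have h2 : ∀ᶠ z in 𝓝 x0, ((a - 1 : ℝ) : EReal) < F z := hl x0 _ h1
  obtain ⟨r, hr, hB⟩ := Metric.eventually_nhds_iff.1 h2
  -- lower bound
  refine ⟨min (a - 1) (a - (2 / r + μ * r / 4) ^ 2 / (2 * μ)), fun z => ?_⟩
  by_cases hz : F z = ⊤
  · rw [hz]; exact le_top
  obtain ⟨b, hb⟩ := proper_real hp hz
  rw [hb]
  by_cases hd : dist z x0 < r
  · have := hB hd
    rw [hb] at this
    have : a - 1 < b := by exact_mod_cast this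
    exact_mod_cast (min_le_left _ _).trans this.le
  · push Not at hd
    set d := dist z x0 with hdd
    have hd0 : 0 < d := hr.trans_le hd
    have ht0 : 0 < r / (2 * d) := by positivity
    have ht1 : r / (2 * d) ≤ 1 := by
      rw [div_le_one (by positivity)]; linarith
    set t := r / (2 * d) with htd
    have htd' : t * d = r / 2 := by rw [htd]; field_simp
    have h3 := lc_real hc ha hb ht0.le ht1
    have h4 : dist ((1 - t) • x0 + t • z) x0 < r := by
      rw [dist_eq_norm]
      have : (1 - t) • x0 + t • z - x0 = t • (z - x0) := by module
      rw [this, norm_smul, ← dist_eq_norm, Real.norm_of_nonneg ht0.le, ← hdd, htd']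
      linarith
    have h5 := (hB h4).trans_le h3
    have hn : ‖x0 - z‖ = d := by rw [hdd, dist_comm, dist_eq_norm]
    rw [hn] at h5
    have h6 : a - 1 < (1 - t) * a + t * b - μ / 2 * (t * (1 - t)) * d ^ 2 := by exact_mod_cast h5
    have h7 : t * (a - 2 / r * d + μ / 2 * (1 - t) * d ^ 2) < t * b := by
      have : t * (2 / r * d) = 1 := by rw [htd]; field_simp
      nlinarith
    have h8 : a - 2 / r * d + μ / 2 * (1 - t) * d ^ 2 < b := lt_of_mul_lt_mul_left h7 ht0.le
    have h9 : μ / 2 * (1 - t) * d ^ 2 = μ / 2 * d ^ 2 - μ * r / 4 * d := by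
      linear_combination (-μ / 2 * d) * htd'
    have h10 : a - (2 / r + μ * r / 4) ^ 2 / (2 * μ) ≤ b := by
      set A := 2 / r + μ * r / 4
      have : A * d - μ / 2 * d ^ 2 ≤ A ^ 2 / (2 * μ) := by
        rw [le_div_iff₀ (by positivity)]
        nlinarith [sq_nonneg (A - μ * d)]
      have : 2 / r * d + μ * r / 4 * d = A * d := by ring
      linarith
    exact_mod_cast (min_le_right _ _).trans h10

lemma exists_min_strong {μ : ℝ} {F : H → EReal} (hp : ProperFn F) (hc : LambdaConvex μ F)
    (hl : LowerSemicontinuous F) (hμ : 0 < μ) : ∃ y, ∀ z, F y ≤ F z := by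
  obtain ⟨m, hm⟩ := bddBelow_strong hp hc hl hμ
  obtain ⟨x0, hx0⟩ := hp.1
  obtain ⟨a, ha⟩ := proper_real hp hx0
  set S : Set ℝ := {v | ∃ y, F y = v}
  have hS : S.Nonempty := ⟨a, x0, ha⟩
  have hSb : BddBelow S := ⟨m, by
    rintro v ⟨y, hy⟩
    have := hm y
    rw [hy] at this
    exact_mod_cast this⟩
  have hI : ∀ y, ((sInf S : ℝ) : EReal) ≤ F y := by
    intro y
    by_cases hy : F y = ⊤
    · rw [hy]; exact le_top
    obtain ⟨b, hb⟩ := proper_real hp hy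
    rw [hb]
    exact_mod_cast csInf_le hSb ⟨y, hb⟩
  set I := sInf S with hIdef
  have hex : ∀ n : ℕ, ∃ y : H, ∃ v : ℝ, F y = v ∧ v < I + 1 / ((n : ℝ) + 1) := by
    intro n
    obtain ⟨v, ⟨y, hy⟩, hv⟩ := exists_lt_of_csInf_lt hS
      (show sInf S < I + 1 / ((n : ℝ) + 1) by
        have : 0 < 1 / ((n : ℝ) + 1) := by positivity
        linarith)
    exact ⟨y, v, hy, hv⟩
  choose y v hy hv using hex
  have key : ∀ n k, μ / 8 * ‖y n - y k‖ ^ 2 ≤ (v n + v k) / 2 - I := by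
    intro n k
    have h1 := (hI _).trans (lc_real hc (hy n) (hy k) (t := 1 / 2) (by norm_num) (by norm_num))
    have h2 : I ≤ (1 - 1 / 2) * v n + 1 / 2 * v k
      - μ / 2 * (1 / 2 * (1 - 1 / 2)) * ‖y n - y k‖ ^ 2 := by exact_mod_cast h1
    nlinarith
  have hcau : CauchySeq y := by
    rw [Metric.cauchySeq_iff]
    intro ε hε
    obtain ⟨N, hN⟩ := exists_nat_one_div_lt (show 0 < μ / 8 * ε ^ 2 by positivity)
    have hmono : ∀ n ≥ N, v n < I + μ / 8 * ε ^ 2 := by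
      intro n hn
      have : 1 / ((n : ℝ) + 1) ≤ 1 / ((N : ℝ) + 1) := by gcongr
      linarith [hv n]
    refine ⟨N, fun n hn k hk => ?_⟩
    have h1 := key n k
    have h2 := hmono n hn
    have h3 := hmono k hk
    rw [dist_eq_norm]
    have : μ / 8 * ‖y n - y k‖ ^ 2 < μ / 8 * ε ^ 2 := by linarith
    have := lt_of_mul_lt_mul_left this (by positivity)
    exact lt_of_pow_lt_pow_left₀ 2 hε.le this
  obtain ⟨y0, hy0⟩ := cauchySeq_tendsto_of_complete hcau
  refine ⟨y0, fun z => le_trans ?_ (hI z)⟩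
  by_contra hcon
  push Not at hcon
  obtain ⟨r, hr1, hr2⟩ := EReal.lt_iff_exists_real_btwn.1 hcon
  have hr1 : I < r := by exact_mod_cast hr1
  have h1 := hy0.eventually (hl y0 _ hr2)
  obtain ⟨N, hN⟩ := exists_nat_one_div_lt (sub_pos.2 hr1)
  obtain ⟨n, hn, hnN⟩ := (h1.and (eventually_ge_atTop N)).exists
  rw [hy n] at hn
  have hn : r < v n := by exact_mod_cast hn
  have : 1 / ((n : ℝ) + 1) ≤ 1 / ((N : ℝ) + 1) := by gcongr
  linarith [hv n]

lemma min_growth {μ : ℝ} {F : H → EReal} (hc : LambdaConvex μ F) (hμ : 0 < μ) {y z : H}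
    {a b : ℝ} (hmin : ∀ z, F y ≤ F z) (hy : F y = a) (hz : F z = b) :
    a + μ / 2 * ‖z - y‖ ^ 2 ≤ b := by
  set D := μ / 2 * ‖z - y‖ ^ 2 with hD
  have hD0 : 0 ≤ D := by positivity
  have key : ∀ t : ℝ, 0 < t → t ≤ 1 → a + (1 - t) * D ≤ b := by
    intro t h0 h1
    have h2 := (hmin _).trans (lc_real hc hy hz h0.le h1)
    rw [hy, norm_sub_rev] at h2
    have h3 : a ≤ (1 - t) * a + t * b - μ / 2 * (t * (1 - t)) * ‖z - y‖ ^ 2 := by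
      exact_mod_cast h2
    have h4 : t * (a + (1 - t) * D) ≤ t * b := by rw [hD]; linarith
    exact le_of_mul_le_mul_left h4 h0
  by_contra hcon
  push Not at hcon
  set δ := a + D - b with hδ
  have hδ0 : 0 < δ := by linarith
  have h1 := key (δ / (2 * (D + δ))) (by positivity) (by
    rw [div_le_one (by positivity)]; linarith)
  have h2 : δ / (2 * (D + δ)) * D < δ := by
    rw [div_mul_eq_mul_div, div_lt_iff₀ (by positivity)]
    nlinarith
  nlinarith

lemma adm_pos {lam τ : ℝ} (hτ : 0 < τ) (hadm : lam < 0 → τ < -1 / lam) : 0 < 1 + τ * lam := by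
  by_cases h : lam < 0
  · have := hadm h
    rw [lt_div_iff_of_neg h] at this
    linarith
  · push Not at h
    positivity

section res

variable {lam τ : ℝ} {f : H → EReal}

lemma lc_pert (hp : ProperFn f) (hc : LambdaConvex lam f) (hτ : 0 < τ) (x : H) :
    LambdaConvex (lam + 1 / τ) (fun y => f y + ((‖y - x‖ ^ 2 / (2 * τ) : ℝ) : EReal)) := by
  intro y z t h0 h1
  rcases h0.eq_or_lt with rfl | h0
  · simp
  rcases h1.eq_or_lt with rfl | h1
  · simp
  have h1' : 0 < 1 - t := by linarith
  by_cases hy : f y = ⊤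
  · simp only [hy]
    rw [EReal.top_add_coe, EReal.coe_mul_top_of_pos h1', EReal.top_add_of_ne_bot, EReal.top_sub_coe]
    · exact le_top
    · by_cases hz : f z = ⊤
      · rw [hz, EReal.top_add_coe, EReal.coe_mul_top_of_pos h0]; simp
      · obtain ⟨b, hb⟩ := proper_real hp hz
        rw [hb]; exact_mod_cast EReal.coe_ne_bot _
  obtain ⟨a, ha⟩ := proper_real hp hy
  by_cases hz : f z = ⊤
  · simp only [hz, ha]
    rw [EReal.top_add_coe, EReal.coe_mul_top_of_pos h0, EReal.add_top_of_ne_bot, EReal.top_sub_coe]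
    · exact le_top
    · exact_mod_cast EReal.coe_ne_bot _
  obtain ⟨b, hb⟩ := proper_real hp hz
  have h2 := lc_real hc ha hb h0.le h1.le
  simp only [ha, hb]
  refine (add_le_add_left h2 _).trans (le_of_eq ?_)
  norm_cast
  have e1 : (1 - t) • y + t • z - x = (1 - t) • (y - x) + t • (z - x) := by module
  have e2 : y - z = (y - x) - (z - x) := by abel
  rw [e1, e2]
  generalize y - x = u
  generalize z - x = w
  rw [norm_add_sq_real, norm_sub_sq_real, norm_smul, norm_smul, Real.norm_of_nonneg h1'.le,
    Real.norm_of_nonneg h0.le, real_inner_smul_left, real_inner_smul_right]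
  field_simp
  ring

lemma mu_pos (hτ : 0 < τ) (hadm : 0 < 1 + τ * lam) : 0 < lam + 1 / τ := by
  have : lam + 1 / τ = (1 + τ * lam) / τ := by field_simp; ring
  rw [this]; positivity

lemma Jres_min (hp : ProperFn f) (hc : LambdaConvex lam f) (hl : LowerSemicontinuous f)
    (hτ : 0 < τ) (hadm : 0 < 1 + τ * lam) (x : H) : ∀ z : H,
      f (Jres f τ x) + ((‖Jres f τ x - x‖ ^ 2 / (2 * τ) : ℝ) : EReal)
        ≤ f z + ((‖z - x‖ ^ 2 / (2 * τ) : ℝ) : EReal) := by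
  have hex : ∃ y : H, ∀ z : H,
      f y + ((‖y - x‖ ^ 2 / (2 * τ) : ℝ) : EReal)
        ≤ f z + ((‖z - x‖ ^ 2 / (2 * τ) : ℝ) : EReal) := by
    refine exists_min_strong (F := fun y => f y + ((‖y - x‖ ^ 2 / (2 * τ) : ℝ) : EReal))
      ⟨?_, ?_⟩ (lc_pert hp hc hτ x) ?_ (mu_pos hτ hadm)
    · obtain ⟨x0, hx0⟩ := hp.1
      obtain ⟨a, ha⟩ := proper_real hp hx0
      refine ⟨x0, ?_⟩
      simp only [ha]
      exact_mod_cast EReal.coe_ne_top _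
    · intro z
      by_cases hz : f z = ⊤
      · simp [hz]
      obtain ⟨a, ha⟩ := proper_real hp hz
      simp only [ha]
      exact_mod_cast EReal.coe_ne_bot _
    · refine LowerSemicontinuous.add' hl (Continuous.lowerSemicontinuous ?_) ?_
      · exact continuous_coe_real_ereal.comp (by fun_prop)
      · intro z
        exact EReal.continuousAt_add (Or.inr (EReal.coe_ne_bot _)) (Or.inr (EReal.coe_ne_top _))
  have e : Jres f τ x = hex.choose := by unfold Jres; rw [dif_pos hex]
  rw [e]
  exact hex.choose_spec

lemma Jres_real (hp : ProperFn f) (hc : LambdaConvex lam f) (hl : LowerSemicontinuous f)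
    (hτ : 0 < τ) (hadm : 0 < 1 + τ * lam) (x : H) : ∃ r : ℝ, f (Jres f τ x) = r := by
  refine proper_real hp fun h => ?_
  obtain ⟨x0, hx0⟩ := hp.1
  obtain ⟨a, ha⟩ := proper_real hp hx0
  have := Jres_min hp hc hl hτ hadm x x0
  rw [h, ha, EReal.top_add_coe, top_le_iff] at this
  exact absurd this (by exact_mod_cast EReal.coe_ne_top _)

lemma Jres_growth (hp : ProperFn f) (hc : LambdaConvex lam f) (hl : LowerSemicontinuous f)
    (hτ : 0 < τ) (hadm : 0 < 1 + τ * lam) (x z : H) {r s : ℝ} (hr : f (Jres f τ x) = r)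
    (hs : f z = s) :
    r + ‖Jres f τ x - x‖ ^ 2 / (2 * τ) + (lam + 1 / τ) / 2 * ‖z - Jres f τ x‖ ^ 2
      ≤ s + ‖z - x‖ ^ 2 / (2 * τ) := by
  refine min_growth (F := fun y => f y + ((‖y - x‖ ^ 2 / (2 * τ) : ℝ) : EReal))
    (lc_pert hp hc hτ x) (mu_pos hτ hadm) (Jres_min hp hc hl hτ hadm x) ?_ ?_
  · simp only [hr]; norm_cast
  · simp only [hs]; norm_cast

lemma Jres_subdiff (hp : ProperFn f) (hc : LambdaConvex lam f) (hl : LowerSemicontinuous f)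
    (hτ : 0 < τ) (hadm : 0 < 1 + τ * lam) (x : H) :
    τ⁻¹ • (x - Jres f τ x) ∈ subdiff lam f (Jres f τ x) := by
  obtain ⟨r, hr⟩ := Jres_real hp hc hl hτ hadm x
  refine ⟨by rw [hr]; exact EReal.coe_ne_top _, fun y => ?_⟩
  by_cases hy : f y = ⊤
  · rw [hy]; exact le_top
  obtain ⟨s, hs⟩ := proper_real hp hy
  have := Jres_growth hp hc hl hτ hadm x y hr hs
  rw [hr, hs]
  norm_cast
  set J := Jres f τ x
  have e : y - x = (y - J) - (x - J) := by abel
  rw [e, norm_sub_rev J x, norm_sub_sq_real (y - J)] at this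
  rw [real_inner_smul_left, real_inner_comm]
  generalize ⟪y - J, x - J⟫ = i at *
  generalize ‖y - J‖ ^ 2 = A at *
  generalize ‖x - J‖ ^ 2 = B at *
  have e2 : (A - 2 * i + B) / (2 * τ) = (1 / τ) / 2 * A - τ⁻¹ * i + B / (2 * τ) := by
    field_simp
  linarith

lemma subdiff_mono (hp : ProperFn f) {x y p q : H} (hpx : p ∈ subdiff lam f x)
    (hqy : q ∈ subdiff lam f y) : lam * ‖x - y‖ ^ 2 ≤ ⟪p - q, x - y⟫ := by
  obtain ⟨a, ha⟩ := proper_real hp hpx.1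
  obtain ⟨b, hb⟩ := proper_real hp hqy.1
  have h1 := hpx.2 y
  have h2 := hqy.2 x
  rw [ha, hb] at h1 h2
  have h1 : a + (⟪p, y - x⟫ + lam / 2 * ‖y - x‖ ^ 2) ≤ b := by exact_mod_cast h1
  have h2 : b + (⟪q, x - y⟫ + lam / 2 * ‖x - y‖ ^ 2) ≤ a := by exact_mod_cast h2
  rw [norm_sub_rev y x, ← neg_sub x y, inner_neg_right] at h1
  rw [inner_sub_left]
  linarith

lemma Jres_lip (hp : ProperFn f) (hc : LambdaConvex lam f) (hl : LowerSemicontinuous f)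
    (hτ : 0 < τ) (hadm : 0 < 1 + τ * lam) (x y : H) :
    ‖Jres f τ x - Jres f τ y‖ ≤ (1 + τ * lam)⁻¹ * ‖x - y‖ := by
  have h := subdiff_mono hp (Jres_subdiff hp hc hl hτ hadm x) (Jres_subdiff hp hc hl hτ hadm y)
  set u := Jres f τ x
  set v := Jres f τ y
  rw [← smul_sub, real_inner_smul_left] at h
  have e : x - u - (y - v) = (x - y) - (u - v) := by abel
  rw [e, inner_sub_left, real_inner_self_eq_norm_sq] at h
  have h2 := real_inner_le_norm (x - y) (u - v)
  have h3 : τ * (lam * ‖u - v‖ ^ 2) ≤ ⟪x - y, u - v⟫ - ‖u - v‖ ^ 2 := by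
    have := mul_le_mul_of_nonneg_left h hτ.le
    rwa [← mul_assoc τ τ⁻¹, mul_inv_cancel₀ hτ.ne', one_mul] at this
  rw [inv_mul_eq_div, le_div_iff₀ hadm]
  rcases (norm_nonneg (u - v)).eq_or_lt with h0 | h0
  · rw [← h0]; simp
  · refine le_of_mul_le_mul_right (a := ‖u - v‖) ?_ h0
    nlinarith

lemma gradNorm_Jres_le (hp : ProperFn f) (hc : LambdaConvex lam f) (hl : LowerSemicontinuous f)
    (hτ : 0 < τ) (hadm : 0 < 1 + τ * lam) (x : H) :
    gradNorm lam f (Jres f τ x) ≤ ENNReal.ofReal (τ⁻¹ * ‖x - Jres f τ x‖) := by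
  have h := Jres_subdiff hp hc hl hτ hadm x
  unfold gradNorm
  rw [if_pos ⟨_, h⟩]
  apply ENNReal.ofReal_le_ofReal
  have e : τ⁻¹ * ‖x - Jres f τ x‖ = ‖τ⁻¹ • (x - Jres f τ x)‖ := by
    rw [norm_smul, Real.norm_of_nonneg (by positivity)]
  rw [e]
  unfold gradMin
  split_ifs with hh
  · exact hh.choose_spec.2 _ h
  · simp

lemma subdiff_min (hp : ProperFn f) {x : H} (hne : (subdiff lam f x).Nonempty) :
    ∃ p ∈ subdiff lam f x, ∀ q ∈ subdiff lam f x, ‖p‖ ≤ ‖q‖ := by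
  obtain ⟨p0, hp0⟩ := hne
  obtain ⟨a, ha⟩ := proper_real hp hp0.1
  have hset : subdiff lam f x = {p : H | ∀ y : H, ∀ s : ℝ, f y = s →
      a + (⟪p, y - x⟫ + lam / 2 * ‖y - x‖ ^ 2) ≤ s} := by
    ext p
    constructor
    · intro h y s hs
      have := h.2 y
      rw [ha, hs] at this
      exact_mod_cast this
    · intro h
      refine ⟨hp0.1, fun y => ?_⟩
      by_cases hy : f y = ⊤
      · rw [hy]; exact le_top
      obtain ⟨s, hs⟩ := proper_real hp hy
      rw [ha, hs]
      exact_mod_cast h y s hs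
  have hcl : IsClosed (subdiff lam f x) := by
    rw [hset]
    simp only [Set.ofPred_forall]
    refine isClosed_iInter fun y => isClosed_iInter fun s => isClosed_iInter fun _ => ?_
    exact isClosed_le (by fun_prop) (by fun_prop)
  have hcv : Convex ℝ (subdiff lam f x) := by
    rw [hset]
    intro p hp q hq s t hs ht hst y v hv
    have h1 := hp y v hv
    have h2 := hq y v hv
    rw [inner_add_left, real_inner_smul_left, real_inner_smul_left]
    have : t = 1 - s := by linarith
    subst this
    nlinarith
  obtain ⟨p, hpm, hpe⟩ := exists_norm_eq_iInf_of_complete_convex ⟨p0, hp0⟩ hcl.isComplete hcv 0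
  refine ⟨p, hpm, fun q hq => ?_⟩
  have : ⨅ w : subdiff lam f x, ‖(0 : H) - w‖ ≤ ‖0 - q‖ :=
    ciInf_le (f := fun w : subdiff lam f x => ‖(0 : H) - w‖)
      ⟨0, Set.forall_mem_range.2 fun _ => norm_nonneg _⟩ ⟨q, hq⟩
  rw [← hpe] at this
  simpa using this

lemma Jres_dist_le (hp : ProperFn f) (hc : LambdaConvex lam f) (hl : LowerSemicontinuous f)
    (hτ : 0 < τ) (hadm : 0 < 1 + τ * lam) (x : H) :
    ENNReal.ofReal (τ⁻¹ * ‖x - Jres f τ x‖) ≤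
      ENNReal.ofReal ((1 + τ * lam)⁻¹) * gradNorm lam f x := by
  by_cases hne : (subdiff lam f x).Nonempty
  · have hm := subdiff_min hp hne
    have hg : gradMin lam f x ∈ subdiff lam f x := by
      unfold gradMin; rw [dif_pos hm]; exact hm.choose_spec.1
    unfold gradNorm
    rw [if_pos hne, ← ENNReal.ofReal_mul (by positivity)]
    apply ENNReal.ofReal_le_ofReal
    have h := subdiff_mono hp hg (Jres_subdiff hp hc hl hτ hadm x)
    set q := gradMin lam f x
    set u := x - Jres f τ x
    rw [inner_sub_left, real_inner_smul_left, real_inner_self_eq_norm_sq] at h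
    have h2 := real_inner_le_norm q u
    rw [inv_mul_eq_div, inv_mul_eq_div, div_le_div_iff₀ hτ hadm]
    rcases (norm_nonneg u).eq_or_lt with h0 | h0
    · rw [← h0]; simp; positivity
    · refine le_of_mul_le_mul_right (a := ‖u‖) ?_ h0
      have h3 : τ * (lam * ‖u‖ ^ 2) ≤ τ * ⟪q, u⟫ - ‖u‖ ^ 2 := by
        have := mul_le_mul_of_nonneg_left h hτ.le
        rwa [mul_sub, ← mul_assoc τ τ⁻¹, mul_inv_cancel₀ hτ.ne', one_mul] at this
      nlinarith
  · unfold gradNorm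
    rw [if_neg hne, ENNReal.mul_top]
    · exact le_top
    · simpa using hadm

end res

lemma mosco_subseq_s19 {fh : ℕ → H → EReal} {f : H → EReal} (hM : Mosco fh f) {φ : ℕ → ℕ}
    (hφ : StrictMono φ) : Mosco (fun k => fh (φ k)) f := by
  constructor
  · intro x
    obtain ⟨xh, h1, h2⟩ := hM.1 x
    refine ⟨xh ∘ φ, h1.comp hφ.tendsto_atTop, le_trans ?_ h2⟩
    exact limsup_le_limsup_of_le (u := fun h => fh h (xh h)) hφ.tendsto_atTop
  · intro xk x hx
    set X : ℕ → H := Function.extend φ xk (fun _ => x) with hX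
    have hXφ : ∀ k, X (φ k) = xk k := fun k => hφ.injective.extend_apply _ _ k
    have h1 := hM.2 X x (by
      intro p
      rw [tendsto_def]
      intro U hU
      have h2 : ∀ᶠ k in atTop, ⟪xk k, p⟫ ∈ U := hx p hU
      obtain ⟨N, hN⟩ := eventually_atTop.1 h2
      refine eventually_atTop.2 ⟨φ N, fun h hh => ?_⟩
      show ⟪X h, p⟫ ∈ U
      by_cases hk : ∃ k, φ k = h
      · obtain ⟨k, rfl⟩ := hk
        rw [hXφ]
        exact hN k (hφ.le_iff_le.1 hh)
      · rw [hX, Function.extend_apply' _ _ _ hk]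
        exact mem_of_mem_nhds hU)
    refine h1.trans ?_
    have h3 : liminf (fun h => fh h (X h)) atTop ≤ liminf (fun h => fh h (X h)) (map φ atTop) :=
      liminf_le_liminf_of_le hφ.tendsto_atTop
    refine h3.trans (le_of_eq ?_)
    show liminf ((fun h => fh h (X h)) ∘ φ) atTop = _
    congr 1
    funext k
    simp [hXφ]

lemma weak_compact (y : ℕ → H) (R : ℝ) (hy : ∀ n, ‖y n‖ ≤ R) :
    ∃ y' : H, ∃ φ : ℕ → ℕ, StrictMono φ ∧
      ∀ p : H, Tendsto (fun k => ⟪y (φ k), p⟫) atTop (𝓝 ⟪y', p⟫) := by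
  set K : Submodule ℝ H := (Submodule.span ℝ (range y)).topologicalClosure with hK
  have hsep : TopologicalSpace.IsSeparable (K : Set H) := by
    rw [hK, Submodule.topologicalClosure_coe]
    exact ((countable_range y).isSeparable.span).closure
  have : TopologicalSpace.SeparableSpace K := hsep.separableSpace
  have : CompleteSpace K := (Submodule.isClosed_topologicalClosure _).completeSpace_coe
  have hmem : ∀ n, y n ∈ K := fun n =>
    Submodule.le_topologicalClosure _ (Submodule.subset_span (mem_range_self n))
  let yK : ℕ → K := fun n => ⟨y n, hmem n⟩
  let u : ℕ → WeakDual ℝ K := fun n => StrongDual.toWeakDual (InnerProductSpace.toDual ℝ K (yK n))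
  obtain ⟨v, -, φ, hφ, hv⟩ := WeakDual.isSeqCompact_closedBall (𝕜 := ℝ) (E := K) 0 R
    (x := u) (by
      intro n
      simp only [u, mem_preimage]
      rw [Metric.mem_closedBall, dist_zero_right]
      exact ((InnerProductSpace.toDual ℝ K).norm_map (yK n)).le.trans (hy n))
  refine ⟨((InnerProductSpace.toDual ℝ K).symm (WeakDual.toStrongDual v) : K), φ, hφ, fun p => ?_⟩
  have h1 : Tendsto (fun k => u (φ k) (K.orthogonalProjectionOnto p)) atTop
      (𝓝 (v (K.orthogonalProjectionOnto p))) :=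
    ((WeakDual.eval_continuous (K.orthogonalProjectionOnto p)).tendsto v).comp hv
  have h2 : ∀ w : K, ⟪(w : H), p⟫ = ⟪w, K.orthogonalProjectionOnto p⟫ := by
    intro w
    exact (Submodule.inner_orthogonalProjectionOnto_eq_of_mem_left w p).symm
  have h3 : ∀ n, ⟪y n, p⟫ = u n (K.orthogonalProjectionOnto p) := by
    intro n
    exact h2 (yK n)
  simp only [h3]
  convert h1 using 2
  rw [h2, InnerProductSpace.toDual_symm_apply]
  rfl

section mosco

variable {lam τ : ℝ} {fh : ℕ → H → EReal} {f : H → EReal}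

/-- distance to the resolvents does not blow up -/
lemma mosco_not_atTop (hfhp : ∀ h, ProperFn (fh h)) (hfhc : ∀ h, LambdaConvex lam (fh h))
    (hfhl : ∀ h, LowerSemicontinuous (fh h)) (hp : ProperFn f) (hM : Mosco fh f)
    (hτ : 0 < τ) (hadm : 0 < 1 + τ * lam) (x y : H) (hy : f y ≠ ⊤) (z : ℕ → H)
    (hz : Tendsto z atTop (𝓝 y)) (hls : limsup (fun h => fh h (z h)) atTop ≤ f y) :
    ¬ Tendsto (fun h => ‖z h - Jres (fh h) τ x‖) atTop atTop := by
  intro hd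
  obtain ⟨a, ha⟩ := proper_real hp hy
  set J := fun h => Jres (fh h) τ x
  set d := fun h => ‖z h - J h‖ with hdef
  set k := fun h => √(d h) with hk
  have hkT : Tendsto k atTop atTop := Real.tendsto_sqrt_atTop.comp hd
  have hkinv : Tendsto (fun h => (k h)⁻¹) atTop (𝓝 0) := tendsto_inv_atTop_zero.comp hkT
  set t := fun h => (k h)⁻¹ ^ 3 with ht
  set w := fun h => (1 - t h) • z h + t h • J h with hw
  have hkd : ∀ h, d h = k h ^ 2 := fun h => (Real.sq_sqrt (norm_nonneg _)).symm
  have hwy : Tendsto w atTop (𝓝 y) := by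
    have h0 : Tendsto (fun h => w h - z h) atTop (𝓝 0) := by
      rw [tendsto_zero_iff_norm_tendsto_zero]
      refine hkinv.congr' ?_
      filter_upwards [hkT.eventually_gt_atTop 0] with h hh
      have e : w h - z h = - (t h • (z h - J h)) := by simp only [hw]; module
      rw [e, norm_neg, norm_smul]
      show _ = ‖t h‖ * d h
      rw [hkd h]
      simp only [ht]
      rw [Real.norm_of_nonneg (by positivity)]
      field_simp
    simpa using h0.add hz
  have hli := hM.2 w y (fun p => (hwy.inner tendsto_const_nhds))
  have hev1 : ∀ᶠ h in atTop, ((a - 1 : ℝ) : EReal) < fh h (w h) := by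
    refine eventually_lt_of_lt_liminf (lt_of_lt_of_le ?_ hli)
    rw [ha]; exact_mod_cast sub_one_lt a
  have hev2 : ∀ᶠ h in atTop, fh h (z h) < ((a + 1 : ℝ) : EReal) := by
    refine eventually_lt_of_limsup_lt (lt_of_le_of_lt hls ?_)
    rw [ha]; exact_mod_cast lt_add_one a
  set e := fun h => ‖z h - x‖
  have he : Tendsto e atTop (𝓝 ‖y - x‖) := (hz.sub_const x).norm
  set μ := lam + 1 / τ with hμd
  have hμ : 0 < μ := mu_pos hτ hadm
  -- the bound
  have hbound : ∀ᶠ h in atTop, -2 < (k h)⁻¹ * e h / τ + lam / 2 * (k h)⁻¹ ^ 2 - μ * k h := by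
    filter_upwards [hev1, hev2, hkT.eventually_ge_atTop 1] with h h1 h2 h3
    obtain ⟨s, hs⟩ := proper_real (hfhp h) (ne_top_of_lt h2)
    obtain ⟨r, hr⟩ := Jres_real (hfhp h) (hfhc h) (hfhl h) hτ hadm x
    have hk0 : 0 < k h := by linarith
    have hkle : (k h)⁻¹ ≤ 1 := inv_le_one_of_one_le₀ h3
    have ht0 : 0 ≤ t h := by simp only [ht]; positivity
    have ht1 : t h ≤ 1 := pow_le_one₀ (by positivity) hkle
    have hg := Jres_growth (hfhp h) (hfhc h) (hfhl h) hτ hadm x (z h) hr hs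
    have hc := h1.trans_le (lc_real (hfhc h) hs hr ht0 ht1)
    have hc : a - 1 < (1 - t h) * s + t h * r - lam / 2 * (t h * (1 - t h)) * d h ^ 2 := by
      exact_mod_cast hc
    rw [hs] at h2
    have h2 : s < a + 1 := by exact_mod_cast h2
    have htri : e h ^ 2 - 2 * d h * e h + d h ^ 2 ≤ ‖J h - x‖ ^ 2 := by
      have e1 : J h - x = (z h - x) - (z h - J h) := by abel
      rw [e1, norm_sub_sq_real (z h - x)]
      have := real_inner_le_norm (z h - x) (z h - J h)
      show e h ^ 2 - 2 * d h * e h + d h ^ 2 ≤ e h ^ 2 - _ + d h ^ 2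
      change _ ≤ e h * d h at this
      linarith
    have hg' : r + ‖J h - x‖ ^ 2 / (2 * τ) + μ / 2 * d h ^ 2 ≤ s + e h ^ 2 / (2 * τ) := hg
    have hdiv : e h ^ 2 / (2 * τ) - d h * e h / τ + d h ^ 2 / (2 * τ) ≤ ‖J h - x‖ ^ 2 / (2 * τ) := by
      have := div_le_div_of_nonneg_right htri (show 0 ≤ 2 * τ by positivity)
      refine le_trans (le_of_eq ?_) this
      field_simp
    have hr' : r ≤ s + d h * e h / τ - (1 / τ) / 2 * d h ^ 2 - μ / 2 * d h ^ 2 := by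
      have : d h ^ 2 / (2 * τ) = (1 / τ) / 2 * d h ^ 2 := by field_simp
      linarith
    have hm := mul_le_mul_of_nonneg_left hr' ht0
    have hlam : lam = μ - 1 / τ := by rw [hμd]; ring
    have e1 : t h * d h = (k h)⁻¹ := by rw [hkd]; simp only [ht]; field_simp
    have e2 : t h * d h ^ 2 = k h := by rw [hkd]; simp only [ht]; field_simp
    have e3 : t h ^ 2 * d h ^ 2 = (k h)⁻¹ ^ 2 := by rw [← e1]; ring
    have e4 : t h * (s + d h * e h / τ - (1 / τ) / 2 * d h ^ 2 - μ / 2 * d h ^ 2)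
        = t h * s + (k h)⁻¹ * e h / τ - (1 / τ) / 2 * k h - μ / 2 * k h := by
      linear_combination (e h / τ) * e1 - ((1 / τ) / 2 + μ / 2) * e2
    have e5 : lam / 2 * (t h * (1 - t h)) * d h ^ 2
        = lam / 2 * k h - lam / 2 * (k h)⁻¹ ^ 2 := by
      linear_combination (lam / 2) * e2 - (lam / 2) * e3
    rw [e4] at hm
    rw [e5] at hc
    have e6 : lam / 2 * k h = μ / 2 * k h - (1 / τ) / 2 * k h := by rw [hlam]; ring
    linarith
  have hlim : Tendsto (fun h => (k h)⁻¹ * e h / τ + lam / 2 * (k h)⁻¹ ^ 2 - μ * k h) atTop atBot := by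
    have h1 : Tendsto (fun h => (k h)⁻¹ * e h / τ + lam / 2 * (k h)⁻¹ ^ 2) atTop
        (𝓝 (0 * ‖y - x‖ / τ + lam / 2 * 0 ^ 2)) :=
      ((hkinv.mul he).div_const τ).add ((hkinv.pow 2).const_mul _)
    have h2 : Tendsto (fun h => - (μ * k h)) atTop atBot :=
      tendsto_neg_atTop_atBot.comp (hkT.const_mul_atTop hμ)
    simpa only [sub_eq_add_neg] using h1.add_atBot h2
  obtain ⟨h, h1, h2⟩ := (hbound.and (hlim.eventually_lt_atBot (-2))).exists
  linarith

lemma mosco_subseq_conv (hfhp : ∀ h, ProperFn (fh h)) (hfhc : ∀ h, LambdaConvex lam (fh h))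
    (hfhl : ∀ h, LowerSemicontinuous (fh h)) (hp : ProperFn f) (hc : LambdaConvex lam f)
    (hl : LowerSemicontinuous f) (hM : Mosco fh f)
    (hτ : 0 < τ) (hadm : 0 < 1 + τ * lam) (x : H) :
    ∃ φ : ℕ → ℕ, Tendsto (fun k => Jres (fh (φ k)) τ x) atTop (𝓝 (Jres f τ x)) := by
  obtain ⟨a, ha⟩ := Jres_real hp hc hl hτ hadm x
  have hmin := Jres_min hp hc hl hτ hadm x
  set y := Jres f τ x
  obtain ⟨z, hz, hls⟩ := hM.1 y
  have hna := mosco_not_atTop hfhp hfhc hfhl hp hM hτ hadm x y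
    (by rw [ha]; exact EReal.coe_ne_top _) z hz hls
  rw [tendsto_atTop] at hna
  push Not at hna
  obtain ⟨M, hfr⟩ := hna
  obtain ⟨φ, hφ, hφM⟩ := extraction_of_frequently_atTop hfr
  obtain ⟨R, hR⟩ := (hz.norm).bddAbove_range
  obtain ⟨y', ψ, hψ, hw⟩ := weak_compact (fun n => Jres (fh (φ n)) τ x) (R + M) (by
    intro n
    have h1 : ‖z (φ n) - Jres (fh (φ n)) τ x‖ < M := by simpa using hφM n
    have h2 : ‖z (φ n)‖ ≤ R := hR ⟨φ n, rfl⟩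
    have e : Jres (fh (φ n)) τ x = z (φ n) - (z (φ n) - Jres (fh (φ n)) τ x) := by abel
    rw [e]
    exact (norm_sub_le _ _).trans (by linarith))
  have hθ : StrictMono (φ ∘ ψ) := hφ.comp hψ
  refine ⟨φ ∘ ψ, ?_⟩
  set J := fun k => Jres (fh ((φ ∘ ψ) k)) τ x with hJ
  have hM' := mosco_subseq_s19 hM hθ
  have hli := hM'.2 J y' hw
  have hzθ : Tendsto (fun k => z ((φ ∘ ψ) k)) atTop (𝓝 y) := hz.comp hθ.tendsto_atTop
  set μ := lam + 1 / τ with hμd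
  have hμ : 0 < μ := mu_pos hτ hadm
  have hsq : Tendsto (fun k => ‖z ((φ ∘ ψ) k) - J k‖ ^ 2) atTop (𝓝 0) := by
    rw [Metric.tendsto_atTop']
    intro ε hε
    set δ := μ / 2 * ε / 3 with hδ
    have hδ0 : 0 < δ := by positivity
    have hev2 : ∀ᶠ k in atTop, fh ((φ ∘ ψ) k) (z ((φ ∘ ψ) k)) < ((a + δ : ℝ) : EReal) := by
      refine hθ.tendsto_atTop.eventually (p := fun h => fh h (z h) < ((a + δ : ℝ) : EReal)) ?_
      refine eventually_lt_of_limsup_lt (lt_of_le_of_lt hls ?_)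
      rw [ha]; exact_mod_cast lt_add_of_pos_right a hδ0
    have hev1 : ∀ᶠ k in atTop,
        ((a + ‖y - x‖ ^ 2 / (2 * τ) - ‖y' - x‖ ^ 2 / (2 * τ) - δ : ℝ) : EReal)
          < fh ((φ ∘ ψ) k) (J k) := by
      refine eventually_lt_of_lt_liminf (lt_of_lt_of_le ?_ hli)
      by_cases hy' : f y' = ⊤
      · rw [hy']; exact EReal.coe_lt_top _
      obtain ⟨b, hb⟩ := proper_real hp hy'
      have := hmin y'
      rw [ha, hb] at this
      have : a + ‖y - x‖ ^ 2 / (2 * τ) ≤ b + ‖y' - x‖ ^ 2 / (2 * τ) := by exact_mod_cast this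
      rw [hb]
      exact_mod_cast (by linarith :
        a + ‖y - x‖ ^ 2 / (2 * τ) - ‖y' - x‖ ^ 2 / (2 * τ) - δ < b)
    have hlim : Tendsto (fun k => ‖z ((φ ∘ ψ) k) - x‖ ^ 2 / (2 * τ)
        - (2 * ⟪J k - x, y' - x⟫ - ‖y' - x‖ ^ 2) / (2 * τ)) atTop
        (𝓝 (‖y - x‖ ^ 2 / (2 * τ) - (2 * ⟪y' - x, y' - x⟫ - ‖y' - x‖ ^ 2) / (2 * τ))) := by
      refine ((((hzθ.sub_const x).norm).pow 2).div_const _).sub (Tendsto.div_const ?_ _)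
      refine Tendsto.sub_const (Tendsto.const_mul _ ?_) _
      simp only [inner_sub_left]
      exact (hw _).sub_const _
    rw [real_inner_self_eq_norm_sq] at hlim
    have hev3 := hlim.eventually (gt_mem_nhds (show
      ‖y - x‖ ^ 2 / (2 * τ) - (2 * ‖y' - x‖ ^ 2 - ‖y' - x‖ ^ 2) / (2 * τ)
      < ‖y - x‖ ^ 2 / (2 * τ) - (2 * ‖y' - x‖ ^ 2 - ‖y' - x‖ ^ 2) / (2 * τ) + δ by linarith))
    have hfin : ∀ᶠ k in atTop, dist (‖z ((φ ∘ ψ) k) - J k‖ ^ 2) 0 < ε := by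
      filter_upwards [hev1, hev2, hev3] with k h1 h2 h3
      obtain ⟨s, hs⟩ := proper_real (hfhp _) (ne_top_of_lt h2)
      obtain ⟨r, hr⟩ := Jres_real (hfhp ((φ ∘ ψ) k)) (hfhc _) (hfhl _) hτ hadm x
      have hg := Jres_growth (hfhp _) (hfhc _) (hfhl _) hτ hadm x _ hr hs
      change fh ((φ ∘ ψ) k) (J k) = r at hr
      change r + ‖J k - x‖ ^ 2 / (2 * τ) + μ / 2 * ‖z ((φ ∘ ψ) k) - J k‖ ^ 2 ≤ _ at hg
      rw [hs] at h2
      rw [hr] at h1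
      have h1 : a + ‖y - x‖ ^ 2 / (2 * τ) - ‖y' - x‖ ^ 2 / (2 * τ) - δ < r := by exact_mod_cast h1
      have h2 : s < a + δ := by exact_mod_cast h2
      have h4 : (2 * ⟪J k - x, y' - x⟫ - ‖y' - x‖ ^ 2) / (2 * τ) ≤ ‖J k - x‖ ^ 2 / (2 * τ) := by
        refine div_le_div_of_nonneg_right ?_ (by positivity)
        have := norm_sub_sq_real (J k - x) (y' - x)
        nlinarith [sq_nonneg ‖J k - x - (y' - x)‖]
      have h5 : (2 * ‖y' - x‖ ^ 2 - ‖y' - x‖ ^ 2) / (2 * τ) = ‖y' - x‖ ^ 2 / (2 * τ) := by ring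
      rw [h5] at h3
      have h6 : μ / 2 * ‖z ((φ ∘ ψ) k) - J k‖ ^ 2 < μ / 2 * ε := by linarith
      have h7 := lt_of_mul_lt_mul_left h6 (by positivity)
      rw [dist_zero_right, Real.norm_of_nonneg (by positivity)]
      exact h7
    obtain ⟨N, hN⟩ := eventually_atTop.1 hfin
    exact ⟨N, fun n hn => hN n hn.le⟩
  have hn : Tendsto (fun k => ‖z ((φ ∘ ψ) k) - J k‖) atTop (𝓝 0) := by
    have := hsq.sqrt
    simpa [Real.sqrt_sq (norm_nonneg _)] using this
  have h0 := tendsto_zero_iff_norm_tendsto_zero.2 hn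
  have := hzθ.sub h0
  simpa using this

lemma mosco_conv (hfhp : ∀ h, ProperFn (fh h)) (hfhc : ∀ h, LambdaConvex lam (fh h))
    (hfhl : ∀ h, LowerSemicontinuous (fh h)) (hp : ProperFn f) (hc : LambdaConvex lam f)
    (hl : LowerSemicontinuous f) (hM : Mosco fh f)
    (hτ : 0 < τ) (hadm : 0 < 1 + τ * lam) (x : H) :
    Tendsto (fun h => Jres (fh h) τ x) atTop (𝓝 (Jres f τ x)) := by
  refine tendsto_of_subseq_tendsto fun ns hns => ?_
  obtain ⟨φ, hφ, hφ'⟩ := strictMono_subseq_of_tendsto_atTop hns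
  obtain ⟨ψ, hψ⟩ := mosco_subseq_conv (fun k => hfhp _) (fun k => hfhc _) (fun k => hfhl _)
    hp hc hl (mosco_subseq_s19 hM hφ') hτ hadm x
  exact ⟨fun k => φ (ψ k), hψ⟩

end mosco

lemma ac_comp {φ η : ℝ → ℝ} (hφ : AbsolutelyContinuousOnInterval φ 0 1)
    (h : ∀ s ∈ Icc (0 : ℝ) 1, ∀ t ∈ Icc (0 : ℝ) 1, |η s - η t| ≤ |φ s - φ t|) :
    AbsolutelyContinuousOnInterval η 0 1 := by
  rw [absolutelyContinuousOnInterval_iff] at hφ ⊢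
  intro ε hε
  obtain ⟨δ, hδ, hE⟩ := hφ ε hε
  refine ⟨δ, hδ, fun E hEm hEs => lt_of_le_of_lt (Finset.sum_le_sum fun i hi => ?_) (hE E hEm hEs)⟩
  have := hEm.1 i hi
  rw [uIcc_of_le zero_le_one] at this
  rw [Real.dist_eq, Real.dist_eq]
  exact h _ this.1 _ this.2

lemma countable_orthonormal {K : Type*} [NormedAddCommGroup K] [InnerProductSpace ℝ K]
    [TopologicalSpace.SeparableSpace K] {ι : Type*} {v : ι → K} (hv : Orthonormal ℝ v) :
    Countable ι := by
  have hd : ∀ i j, i ≠ j → 1 ≤ dist (v i) (v j) := by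
    intro i j hij
    have h1 : ‖v i - v j‖ ^ 2 = 2 := by
      rw [norm_sub_sq_real, hv.1 i, hv.1 j, hv.2 hij]; norm_num
    rw [dist_eq_norm]
    nlinarith [norm_nonneg (v i - v j)]
  have h := (Set.PairwiseDisjoint.countable_of_isOpen (a := (univ : Set ι))
    (s := fun i => Metric.ball (v i) (1 / 2)) ?_ (fun i _ => Metric.isOpen_ball)
    (fun i _ => ⟨v i, Metric.mem_ball_self (by norm_num)⟩))
  · exact countable_univ_iff.1 h
  · intro i _ j _ hij
    refine Metric.ball_disjoint_ball ?_
    have := hd i j hij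
    linarith

lemma norm_sub_le_int {γ : ℝ → H} {g : ℝ → H} (hg : IntegrableOn g (Icc 0 1))
    (hγ : ∀ t ∈ Icc (0 : ℝ) 1, γ t = γ 0 + ∫ s in (0 : ℝ)..t, g s)
    {s t : ℝ} (hs : s ∈ Icc (0 : ℝ) 1) (ht : t ∈ Icc (0 : ℝ) 1) :
    ‖γ s - γ t‖ ≤ |(∫ r in (0 : ℝ)..s, ‖g r‖) - ∫ r in (0 : ℝ)..t, ‖g r‖| := by
  have hgII : ∀ a ∈ Icc (0 : ℝ) 1, IntervalIntegrable g volume 0 a := by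
    intro a ha
    rw [intervalIntegrable_iff_integrableOn_Ioc_of_le ha.1]
    exact hg.mono_set (Ioc_subset_Icc_self.trans (Icc_subset_Icc le_rfl ha.2))
  rw [hγ s hs, hγ t ht, add_sub_add_left_eq_sub,
    intervalIntegral.integral_interval_sub_left (hgII s hs) (hgII t ht),
    intervalIntegral.integral_interval_sub_left (hgII s hs).norm (hgII t ht).norm]
  exact intervalIntegral.norm_integral_le_abs_integral_norm

lemma isAC_of_lip {γ η : ℝ → H} (hAC : IsACCurve 0 1 γ) {C : ℝ} (hC : 0 ≤ C)
    (hlip : ∀ s ∈ Icc (0 : ℝ) 1, ∀ t ∈ Icc (0 : ℝ) 1, ‖η s - η t‖ ≤ C * ‖γ s - γ t‖) :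
    IsACCurve 0 1 η := by
  obtain ⟨g, hg, hγ⟩ := hAC
  set m : ℝ → ℝ := fun s => C * ‖g s‖ with hm
  have hmi : IntegrableOn m (Icc 0 1) := hg.norm.const_mul C
  have hmI : IntervalIntegrable m volume 0 1 := by
    rw [intervalIntegrable_iff_integrableOn_Ioc_of_le zero_le_one]
    exact hmi.mono_set Ioc_subset_Icc_self
  set φ : ℝ → ℝ := fun t => ∫ s in (0 : ℝ)..t, m s with hφ
  have hφAC : AbsolutelyContinuousOnInterval φ 0 1 :=
    hmI.absolutelyContinuousOnInterval_intervalIntegral (by simp)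
  have hηφ : ∀ s ∈ Icc (0 : ℝ) 1, ∀ t ∈ Icc (0 : ℝ) 1, ‖η s - η t‖ ≤ |φ s - φ t| := by
    intro s hs t ht
    refine (hlip s hs t ht).trans ?_
    refine (mul_le_mul_of_nonneg_left (norm_sub_le_int hg hγ hs ht) hC).trans (le_of_eq ?_)
    simp only [hφ, hm, intervalIntegral.integral_const_mul]
    rw [← mul_sub, abs_mul, abs_of_nonneg hC]
  have hηc : ContinuousOn η (Icc 0 1) := by
    have hφc : ContinuousOn φ (Icc 0 1) := by
      have := hφAC.continuousOn
      rwa [uIcc_of_le zero_le_one] at this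
    intro t ht
    have h1 : Tendsto (fun s => |φ s - φ t|) (𝓝[Icc 0 1] t) (𝓝 0) := by
      have := ((hφc t ht).tendsto.sub_const (φ t)).abs
      simpa using this
    rw [ContinuousWithinAt, tendsto_iff_norm_sub_tendsto_zero]
    refine squeeze_zero' (Eventually.of_forall fun _ => norm_nonneg _) ?_ h1
    filter_upwards [self_mem_nhdsWithin] with s hs
    exact hηφ s hs t ht
  set K : Submodule ℝ H := (Submodule.span ℝ (η '' Icc 0 1)).topologicalClosure with hK
  have hsep : TopologicalSpace.IsSeparable (K : Set H) := by
    rw [hK, Submodule.topologicalClosure_coe]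
    exact ((isCompact_Icc.image_of_continuousOn hηc).isSeparable.span).closure
  have : TopologicalSpace.SeparableSpace K := hsep.separableSpace
  have : CompleteSpace K := (Submodule.isClosed_topologicalClosure _).completeSpace_coe
  have hmem : ∀ t ∈ Icc (0 : ℝ) 1, η t ∈ K := fun t ht =>
    Submodule.le_topologicalClosure _ (Submodule.subset_span (mem_image_of_mem _ ht))
  obtain ⟨w, b, -⟩ := exists_hilbertBasis ℝ K
  have : Countable w := countable_orthonormal b.orthonormal
  have hbo : Orthonormal ℝ (fun i => (b i : H)) := b.orthonormal.comp_linearIsometry K.subtypeₗᵢ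
  set c : w → ℝ → ℝ := fun i t => ⟪(b i : H), η t⟫ with hc
  have hcAC : ∀ i, AbsolutelyContinuousOnInterval (c i) 0 1 := by
    intro i
    refine ac_comp hφAC fun s hs t ht => ?_
    simp only [hc]
    rw [← inner_sub_right]
    refine (abs_real_inner_le_norm _ _).trans ?_
    rw [hbo.1 i, one_mul]
    exact hηφ s hs t ht
  -- good times
  have hgood : ∀ᵐ t ∂(volume.restrict (Icc (0 : ℝ) 1)), ∀ S : Finset w,
      ∑ i ∈ S, (deriv (c i) t) ^ 2 ≤ (m t) ^ 2 := by
    have h1 : ∀ᵐ t, ∀ i, t ∈ uIcc (0 : ℝ) 1 → DifferentiableAt ℝ (c i) t :=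
      ae_all_iff.2 fun i => (hcAC i).ae_differentiableAt
    have h2 := hmI.ae_hasDerivAt_integral
    have h3 : ∀ᵐ t : ℝ, t ≠ 0 := by simp [ae_iff, measure_singleton]
    have h4 : ∀ᵐ t : ℝ, t ≠ 1 := by simp [ae_iff, measure_singleton]
    rw [ae_restrict_iff' measurableSet_Icc]
    filter_upwards [h1, h2, h3, h4] with t h1 h2 h3 h4 ht S
    rw [uIcc_of_le zero_le_one] at h1 h2
    have hφd : HasDerivAt φ (m t) t := h2 ht 0 (by simp)
    have hs1 : Tendsto (fun s => ∑ i ∈ S, (slope (c i) t s) ^ 2) (𝓝[≠] t)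
        (𝓝 (∑ i ∈ S, (deriv (c i) t) ^ 2)) :=
      tendsto_finsetSum _ fun i _ =>
        ((hasDerivAt_iff_tendsto_slope.1 (h1 i ht).hasDerivAt).pow 2)
    have hs2 : Tendsto (fun s => (slope φ t s) ^ 2) (𝓝[≠] t) (𝓝 ((m t) ^ 2)) :=
      (hasDerivAt_iff_tendsto_slope.1 hφd).pow 2
    refine le_of_tendsto_of_tendsto hs1 hs2 ?_
    have hnear : ∀ᶠ s in 𝓝[≠] t, s ∈ Icc (0 : ℝ) 1 :=
      nhdsWithin_le_nhds
        (Icc_mem_nhds (lt_of_le_of_ne ht.1 (Ne.symm h3)) (lt_of_le_of_ne ht.2 h4))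
    filter_upwards [hnear] with s hs
    have hb := hbo.sum_inner_products_le (η s - η t) (s := S)
    have hle := pow_le_pow_left₀ (norm_nonneg _) (hηφ s hs t ht) 2
    rw [sq_abs] at hle
    have e1 : ∑ i ∈ S, (slope (c i) t s) ^ 2
        = ((s - t)⁻¹) ^ 2 * ∑ i ∈ S, ‖⟪(b i : H), η s - η t⟫‖ ^ 2 := by
      rw [Finset.mul_sum]
      refine Finset.sum_congr rfl fun i _ => ?_
      simp only [slope_def_field, hc, Real.norm_eq_abs, sq_abs, inner_sub_right]
      ring
    have e2 : (slope φ t s) ^ 2 = ((s - t)⁻¹) ^ 2 * (φ s - φ t) ^ 2 := by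
      rw [slope_def_field]; ring
    rw [e1, e2]
    exact mul_le_mul_of_nonneg_left (hb.trans hle) (by positivity)
  have hMem : ∀ t, (∀ S : Finset w, ∑ i ∈ S, (deriv (c i) t) ^ 2 ≤ (m t) ^ 2) →
      Memℓp (fun i => deriv (c i) t) 2 := by
    intro t ht
    refine memℓp_gen' (C := (m t) ^ 2) fun S => ?_
    simpa using ht S
  set G : ℝ → K := fun t =>
    if h : Memℓp (fun i => deriv (c i) t) 2 then
      b.repr.symm (⟨fun i => deriv (c i) t, h⟩ : lp (fun _ : w => ℝ) 2) else 0 with hG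
  have hm0 : ∀ t, 0 ≤ m t := fun t => by simp only [hm]; positivity
  have hGn : ∀ᵐ t ∂(volume.restrict (Icc (0 : ℝ) 1)), ‖G t‖ ≤ m t := by
    filter_upwards [hgood] with t ht
    simp only [hG]
    rw [dif_pos (hMem t ht), LinearIsometryEquiv.norm_map]
    refine lp.norm_le_of_forall_sum_le (by norm_num) (hm0 t) fun S => ?_
    simpa using ht S
  have hGi : ∀ᵐ t ∂(volume.restrict (Icc (0 : ℝ) 1)), ∀ i, ⟪b i, G t⟫ = deriv (c i) t := by
    filter_upwards [hgood] with t ht i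
    rw [← b.repr_apply_apply]
    simp only [hG]
    rw [dif_pos (hMem t ht), LinearIsometryEquiv.apply_symm_apply]
  have hGm : AEStronglyMeasurable G (volume.restrict (Icc (0 : ℝ) 1)) := by
    refine aestronglyMeasurable_of_tendsto_ae (atTop : Filter (Finset w))
      (f := fun S t => ∑ i ∈ S, deriv (c i) t • b i) (fun S => ?_) ?_
    · refine Finset.aestronglyMeasurable_fun_sum _ fun i _ => ?_
      exact ((measurable_deriv (c i)).aestronglyMeasurable).smul_const _
    · filter_upwards [hgood] with t ht
      have := b.hasSum_repr_symm (⟨fun i => deriv (c i) t, hMem t ht⟩ : lp (fun _ : w => ℝ) 2)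
      simp only [hG]
      rw [dif_pos (hMem t ht)]
      exact this
  have hGint : IntegrableOn G (Icc 0 1) := Integrable.mono' hmi hGm hGn
  refine ⟨fun t => (G t : H), K.subtypeL.integrable_comp hGint, fun T hT => ?_⟩
  have hsub : Ioc (0 : ℝ) T ⊆ Icc 0 1 := Ioc_subset_Icc_self.trans (Icc_subset_Icc le_rfl hT.2)
  have hGI : IntervalIntegrable G volume 0 T := by
    rw [intervalIntegrable_iff_integrableOn_Ioc_of_le hT.1]
    exact hGint.mono_set hsub
  have hcomm : ∫ s in (0 : ℝ)..T, (G s : H) = ((∫ s in (0 : ℝ)..T, G s : K) : H) :=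
    K.subtypeL.intervalIntegral_comp_comm hGI
  have h0 : (0 : ℝ) ∈ Icc (0 : ℝ) 1 := by simp
  have hkey : (⟨η T, hmem T hT⟩ : K) - ⟨η 0, hmem 0 h0⟩ = ∫ s in (0 : ℝ)..T, G s := by
    apply b.repr.injective
    ext i
    rw [b.repr_apply_apply, b.repr_apply_apply]
    have e1 : ⟪b i, ∫ s in (0 : ℝ)..T, G s⟫ = ∫ s in (0 : ℝ)..T, ⟪b i, G s⟫ :=
      ((innerSL ℝ (b i)).intervalIntegral_comp_comm hGI).symm
    have e2 : ∫ s in (0 : ℝ)..T, ⟪b i, G s⟫ = ∫ s in (0 : ℝ)..T, deriv (c i) s := by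
      refine intervalIntegral.integral_congr_ae ?_
      rw [uIoc_of_le hT.1]
      filter_upwards [(ae_restrict_iff' measurableSet_Icc).1 hGi] with s hs hs'
      exact hs (hsub hs') i
    have e3 := ((hcAC i).mono (c := 0) (d := T) (by
      rw [uIcc_of_le hT.1, uIcc_of_le zero_le_one]
      exact Icc_subset_Icc le_rfl hT.2)).integral_deriv_eq_sub
    rw [e1, e2, e3, inner_sub_right]
    rfl
  rw [hcomm, ← hkey]
  simp

lemma deriv_le {γ η g k : ℝ → H} {C : ℝ} (hg : IntegrableOn g (Icc 0 1))
    (hγ : ∀ t ∈ Icc (0 : ℝ) 1, γ t = γ 0 + ∫ s in (0 : ℝ)..t, g s)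
    (hk : IntegrableOn k (Icc 0 1))
    (hη : ∀ t ∈ Icc (0 : ℝ) 1, η t = η 0 + ∫ s in (0 : ℝ)..t, k s)
    (hlip : ∀ s ∈ Icc (0 : ℝ) 1, ∀ t ∈ Icc (0 : ℝ) 1, ‖η s - η t‖ ≤ C * ‖γ s - γ t‖) :
    ∀ᵐ t ∂(volume.restrict (Ioc (0 : ℝ) 1)), ‖k t‖ ≤ C * ‖g t‖ := by
  have hI : ∀ {g : ℝ → H}, IntegrableOn g (Icc 0 1) → IntervalIntegrable g volume 0 1 := by
    intro g hg
    rw [intervalIntegrable_iff_integrableOn_Ioc_of_le zero_le_one]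
    exact hg.mono_set Ioc_subset_Icc_self
  have h4 : ∀ᵐ t : ℝ, t ≠ 1 := by simp [ae_iff, measure_singleton]
  rw [ae_restrict_iff' measurableSet_Ioc]
  filter_upwards [(hI hg).ae_hasDerivAt_integral, (hI hk).ae_hasDerivAt_integral, h4]
    with t h1 h2 h4 ht
  rw [uIcc_of_le zero_le_one] at h1 h2
  have htI : t ∈ Icc (0 : ℝ) 1 := Ioc_subset_Icc_self ht
  have hnb : Icc (0 : ℝ) 1 ∈ 𝓝 t := Icc_mem_nhds ht.1 (lt_of_le_of_ne ht.2 h4)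
  have d1 : HasDerivAt γ (g t) t := by
    refine HasDerivAt.congr_of_eventuallyEq ((h1 htI 0 (by simp)).const_add (γ 0)) ?_
    filter_upwards [hnb] with s hs using hγ s hs
  have d2 : HasDerivAt η (k t) t := by
    refine HasDerivAt.congr_of_eventuallyEq ((h2 htI 0 (by simp)).const_add (η 0)) ?_
    filter_upwards [hnb] with s hs using hη s hs
  refine le_of_tendsto_of_tendsto (hasDerivAt_iff_tendsto_slope.1 d2).norm
    ((hasDerivAt_iff_tendsto_slope.1 d1).norm.const_mul C) ?_
  have hnear : ∀ᶠ s in 𝓝[≠] t, s ∈ Icc (0 : ℝ) 1 := nhdsWithin_le_nhds hnb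
  filter_upwards [hnear] with s hs
  simp only [slope_def_module, norm_smul]
  have := mul_le_mul_of_nonneg_left (hlip s hs t htI) (norm_nonneg (s - t)⁻¹)
  linarith

/-- limsup inequality for the actions of the resolvent-regularized curves. -/
theorem statement19 (lam : ℝ) (fh : ℕ → H → EReal) (f : H → EReal)
    (hfh_proper : ∀ h, ProperFn (fh h)) (hfh_conv : ∀ h, LambdaConvex lam (fh h))
    (hfh_lsc : ∀ h, LowerSemicontinuous (fh h))
    (hf_proper : ProperFn f) (hf_conv : LambdaConvex lam f) (hf_lsc : LowerSemicontinuous f)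
    (hM : Mosco fh f)
    (τ : ℝ) (hτ : 0 < τ) (hadm : lam < 0 → τ < -1 / lam)
    (γ : ℝ → H) (hAC : IsACCurve 0 1 γ) (hfin : actionFn lam f 0 1 γ ≠ ⊤) :
    (∀ h, IsACCurve 0 1 (fun t => Jres (fh h) τ (γ t))) ∧
    Filter.limsup (fun h => actionFn lam (fh h) 0 1 (fun t => Jres (fh h) τ (γ t))) atTop
      ≤ ENNReal.ofReal ((1 + τ * lam)⁻¹ ^ 2) * actionFn lam f 0 1 γ := by
  have hc0 : 0 < 1 + τ * lam := adm_pos hτ hadm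
  set c := 1 + τ * lam with hc
  have hci : 0 < c⁻¹ := by positivity
  have hlip : ∀ h, ∀ s ∈ Icc (0 : ℝ) 1, ∀ t ∈ Icc (0 : ℝ) 1,
      ‖Jres (fh h) τ (γ s) - Jres (fh h) τ (γ t)‖ ≤ c⁻¹ * ‖γ s - γ t‖ := fun h s _ t _ =>
    Jres_lip (hfh_proper h) (hfh_conv h) (hfh_lsc h) hτ hc0 _ _
  have hACh : ∀ h, IsACCurve 0 1 (fun t => Jres (fh h) τ (γ t)) := fun h =>
    isAC_of_lip hAC hci.le (hlip h)
  refine ⟨hACh, ?_⟩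
  set g := hAC.choose with hgdef
  have hg := hAC.choose_spec.1
  have hγ := hAC.choose_spec.2
  rw [← hgdef] at hg hγ
  have hact : actionFn lam f 0 1 γ
      = ∫⁻ t in Ioc (0 : ℝ) 1, (ENNReal.ofReal (‖g t‖ ^ 2) + gradNorm lam f (γ t) ^ 2) := by
    unfold actionFn; rw [dif_pos hAC]
  have hgm : AEMeasurable (fun t => ENNReal.ofReal (‖g t‖ ^ 2)) (volume.restrict (Ioc (0 : ℝ) 1)) :=
    ((hg.mono_set Ioc_subset_Icc_self).aestronglyMeasurable.norm.aemeasurable.pow_const 2).ennreal_ofReal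
  have hγc : ContinuousOn γ (Icc 0 1) := by
    have h1 : ContinuousOn (fun t => γ 0 + ∫ s in (0 : ℝ)..t, g s) (Icc 0 1) := by
      refine continuousOn_const.add ?_
      have h2 := intervalIntegral.continuousOn_primitive_interval (a := (0 : ℝ)) (b := 1) (f := g)
        (μ := volume) (by rwa [uIcc_of_le zero_le_one])
      rwa [uIcc_of_le zero_le_one] at h2
    exact h1.congr hγ
  have hJc : ∀ h, Continuous (Jres (fh h) τ) := fun h =>
    (LipschitzWith.of_dist_le_mul (K := ⟨c⁻¹, hci.le⟩) fun x y => by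
      rw [dist_eq_norm, dist_eq_norm]
      exact Jres_lip (hfh_proper h) (hfh_conv h) (hfh_lsc h) hτ hc0 x y).continuous
  set u : ℕ → ℝ → ℝ≥0∞ := fun h t =>
    ENNReal.ofReal ((τ⁻¹ * ‖γ t - Jres (fh h) τ (γ t)‖) ^ 2) with hu
  set A : ℝ≥0∞ := ∫⁻ t in Ioc (0 : ℝ) 1, ENNReal.ofReal (c⁻¹ ^ 2) * ENNReal.ofReal (‖g t‖ ^ 2)
    with hA
  set L : ℝ≥0∞ := ∫⁻ t in Ioc (0 : ℝ) 1,
    ENNReal.ofReal ((τ⁻¹ * ‖γ t - Jres f τ (γ t)‖) ^ 2) with hL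
  have hbound : ∀ h, actionFn lam (fh h) 0 1 (fun t => Jres (fh h) τ (γ t))
      ≤ A + ∫⁻ t in Ioc (0 : ℝ) 1, u h t := by
    intro h
    unfold actionFn
    rw [dif_pos (hACh h), hA, ← lintegral_add_left' (hgm.const_mul _)]
    refine lintegral_mono_ae ?_
    filter_upwards [deriv_le hg hγ (hACh h).choose_spec.1 (hACh h).choose_spec.2 (hlip h)] with t ht
    refine add_le_add ?_ ?_
    · rw [← ENNReal.ofReal_mul (by positivity), ← mul_pow]
      exact ENNReal.ofReal_le_ofReal (pow_le_pow_left₀ (norm_nonneg _) ht 2)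
    · simp only [hu]
      rw [ENNReal.ofReal_pow (by positivity)]
      exact pow_le_pow_left₀ zero_le
        (gradNorm_Jres_le (hfh_proper h) (hfh_conv h) (hfh_lsc h) hτ hc0 (γ t)) 2
  have hconv : ∀ x, Tendsto (fun h => Jres (fh h) τ x) atTop (𝓝 (Jres f τ x)) := fun x =>
    mosco_conv hfh_proper hfh_conv hfh_lsc hf_proper hf_conv hf_lsc hM hτ hc0 x
  obtain ⟨R0, hR0⟩ := ((hconv (γ 0)).const_sub (γ 0)).norm.bddAbove_range
  obtain ⟨R1, hR1⟩ := isCompact_Icc.exists_bound_of_continuousOn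
    (hγc.sub (continuousOn_const (c := γ 0)))
  have hub : ∀ h, ∀ t ∈ Icc (0 : ℝ) 1,
      ‖γ t - Jres (fh h) τ (γ t)‖ ≤ R0 + R1 + c⁻¹ * R1 := by
    intro h t ht
    have e : γ t - Jres (fh h) τ (γ t) = (γ 0 - Jres (fh h) τ (γ 0)) + (γ t - γ 0)
      - (Jres (fh h) τ (γ t) - Jres (fh h) τ (γ 0)) := by abel
    have h1 : ‖γ 0 - Jres (fh h) τ (γ 0)‖ ≤ R0 := hR0 ⟨h, rfl⟩
    have h2 : ‖γ t - γ 0‖ ≤ R1 := hR1 t ht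
    have h3 := hlip h t ht 0 (by simp)
    have h4 := mul_le_mul_of_nonneg_left h2 hci.le
    rw [e]
    refine (norm_sub_le _ _).trans ?_
    have := norm_add_le (γ 0 - Jres (fh h) τ (γ 0)) (γ t - γ 0)
    linarith
  have hlimu : Tendsto (fun h => ∫⁻ t in Ioc (0 : ℝ) 1, u h t) atTop (𝓝 L) := by
    refine tendsto_lintegral_of_dominated_convergence'
      (fun _ => ENNReal.ofReal ((τ⁻¹ * (R0 + R1 + c⁻¹ * R1)) ^ 2)) ?_ ?_ ?_ ?_
    · intro h
      have h1 : ContinuousOn (fun t => (τ⁻¹ * ‖γ t - Jres (fh h) τ (γ t)‖) ^ 2) (Icc 0 1) :=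
        (continuousOn_const.mul (hγc.sub ((hJc h).comp_continuousOn hγc)).norm).pow 2
      exact ((h1.mono Ioc_subset_Icc_self).aemeasurable measurableSet_Ioc).ennreal_ofReal
    · intro h
      rw [EventuallyLE, ae_restrict_iff' measurableSet_Ioc]
      refine Eventually.of_forall fun t ht => ?_
      refine ENNReal.ofReal_le_ofReal (pow_le_pow_left₀ (by positivity) ?_ 2)
      exact mul_le_mul_of_nonneg_left (hub h t (Ioc_subset_Icc_self ht)) (by positivity)
    · rw [lintegral_const]
      simp
    · refine Eventually.of_forall fun t => ?_
      exact ENNReal.tendsto_ofReal ((((hconv (γ t)).const_sub (γ t)).norm.const_mul τ⁻¹).pow 2)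
  have hLle : L ≤ ENNReal.ofReal (c⁻¹ ^ 2) * ∫⁻ t in Ioc (0 : ℝ) 1, gradNorm lam f (γ t) ^ 2 := by
    rw [← lintegral_const_mul' _ _ ENNReal.ofReal_ne_top]
    refine lintegral_mono fun t => ?_
    rw [ENNReal.ofReal_pow (by positivity), ENNReal.ofReal_pow hci.le, ← mul_pow]
    exact pow_le_pow_left₀ zero_le
      (Jres_dist_le hf_proper hf_conv hf_lsc hτ hc0 (γ t)) 2
  calc limsup (fun h => actionFn lam (fh h) 0 1 (fun t => Jres (fh h) τ (γ t))) atTop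
      ≤ limsup (fun h => A + ∫⁻ t in Ioc (0 : ℝ) 1, u h t) atTop :=
        limsup_le_limsup (Eventually.of_forall hbound)
    _ = A + L := (tendsto_const_nhds.add hlimu).limsup_eq
    _ ≤ ENNReal.ofReal (c⁻¹ ^ 2) * actionFn lam f 0 1 γ := by
        rw [hact, lintegral_add_left' hgm, mul_add, hA,
          lintegral_const_mul' _ _ ENNReal.ofReal_ne_top]
        gcongr

end
end
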